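/- arXiv:2508.17470 — 5 statements merged into one kernel-verified Lean document; each statement's English description precedes it below -/
import Mathlib

section
/- Let 0 ≤ α < n, let 1 < p < n/α (with the convention n/0 = ∞, so 1 < p < ∞ when α = 0), and let 1/q = 1/p − α/n. Then there exists a constant C > 0 such that ‖M_α b‖_{ℓ^q(ℤ^n)} ≤ C ‖b‖_{ℓ^p(ℤ^n)} for all b ∈ ℓ^p(ℤ^n). -/
open scoped ENNReal BigOperators Classical

noncomputable def eucZ {n : ℕ} (v : Fin n → ℤ) : ℝ :=
  Real.sqrt (∑ k, ((v k : ℝ)) ^ 2)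

noncomputable def eucR {n : ℕ} (v : Fin n → ℝ) : ℝ :=
  Real.sqrt (∑ k, (v k) ^ 2)

noncomputable def lpNorm {n : ℕ} (p : ℝ) (b : (Fin n → ℤ) → ℝ) : ℝ≥0∞ :=
  (∑' i : Fin n → ℤ, ENNReal.ofReal |b i| ^ p) ^ (1 / p)

noncomputable def Tfs {n m : ℕ} (al : Fin m → ℝ) (A : Fin m → Matrix (Fin n) (Fin n) ℤ)
    (b : (Fin n → ℤ) → ℝ) (j : Fin n → ℤ) : ℝ≥0∞ :=
  ∑' i : Fin n → ℤ,
    if ∀ k, i ≠ (A k).mulVec j then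
      ENNReal.ofReal (|b i| / ∏ k, eucZ (i - (A k).mulVec j) ^ (al k))
    else 0

noncomputable def Mfr {n : ℕ} (γ : ℝ) (b : (Fin n → ℤ) → ℝ) (j : Fin n → ℤ) : ℝ≥0∞ :=
  ⨆ N : ℕ, ENNReal.ofReal ((2 * (N : ℝ) + 1) ^ (γ - (n : ℝ)) *
    ∑ i ∈ Finset.Icc (fun k => j k - (N : ℤ)) (fun k => j k + (N : ℤ)), |b i|)

noncomputable def Iop {n : ℕ} (α : ℝ) (b : (Fin n → ℤ) → ℝ) (j : Fin n → ℤ) : ℝ≥0∞ :=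
  ∑' i : Fin n → ℤ, if i ≠ j then ENNReal.ofReal (|b i| / eucZ (i - j) ^ ((n : ℝ) - α)) else 0

def IsPAtom {n : ℕ} (p : ℝ) (d : ℕ) (a : (Fin n → ℤ) → ℝ) (i0 : Fin n → ℤ) (N : ℕ) : Prop :=
  (∀ i : Fin n → ℤ, a i ≠ 0 → ∀ t, |i t - i0 t| ≤ (N : ℤ)) ∧
  (∀ i : Fin n → ℤ, |a i| ≤ ((2 * (N : ℝ) + 1) ^ n) ^ (-(1 / p))) ∧
  (∀ β : Fin n → ℕ, (∑ t, β t) ≤ d →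
    ∑ i ∈ Finset.Icc (fun t => i0 t - (N : ℤ)) (fun t => i0 t + (N : ℤ)),
      (∏ t, ((i t : ℝ)) ^ (β t)) * a i = 0)

/-!
Normalise `M_α` by powers `|Q| ^ (θ - 1)` of the size of the cube, with `θ = α / n`. For fixed `Q`
this is log-linear in `θ`, so the maximal function is log-convex in `θ`. At `θ = 1 / p` Hölder's
inequality bounds it pointwise by `‖b‖_p`, which gives Hedberg's inequality
`M_α b ≤ (M_0 b) ^ (1 - θ p) ‖b‖_p ^ (θ p)`. Since `(1 - θ p) q = p`, the `ℓ^p → ℓ^q` bound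
reduces to the `ℓ^p` bound for the Hardy-Littlewood maximal function `M_0`. Vitali's covering lemma
makes `M_0` of weak type `(1, 1)`; applied at level `t` to the part of `b` exceeding `t / 2` and
integrated over `t` against `t ^ (p - 2)`, this yields the strong type `(p, p)`.
-/

section LayerCake

open MeasureTheory

variable {X Y : Type*} [MeasurableSpace X] [MeasurableSpace Y] {μ : Measure X} {ν : Measure Y}

theorem lintegral_rpow_eq_lintegral_meas_ofReal_lt_mul {F : X → ℝ≥0∞} (hF : AEMeasurable F μ)
    (hF_top : ∀ᵐ x ∂μ, F x ≠ ⊤) {p : ℝ} (hp : 0 < p) :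
    ∫⁻ x, F x ^ p ∂μ = ENNReal.ofReal p *
      ∫⁻ t in Set.Ioi (0 : ℝ), μ {x | ENNReal.ofReal t < F x} * ENNReal.ofReal (t ^ (p - 1)) := by
  have hpow : ∫⁻ x, F x ^ p ∂μ = ∫⁻ x, ENNReal.ofReal ((F x).toReal ^ p) ∂μ := by
    refine lintegral_congr_ae (hF_top.mono fun x hx => ?_)
    dsimp only
    rw [← ENNReal.ofReal_rpow_of_nonneg ENNReal.toReal_nonneg hp.le, ENNReal.ofReal_toReal hx]
  rw [hpow, lintegral_rpow_eq_lintegral_meas_lt_mul μ (.of_forall fun _ => ENNReal.toReal_nonneg)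
    hF.ennreal_toReal hp]
  congr 1
  refine setLIntegral_congr_fun measurableSet_Ioi fun t (ht : 0 < t) => ?_
  congr 1
  refine measure_congr (hF_top.mono fun x hx => ?_)
  exact propext (ENNReal.ofReal_lt_iff_lt_toReal ht.le hx).symm

theorem lintegral_rpow_eq_lintegral_setLIntegral_ofReal_lt_mul {G : Y → ℝ≥0∞}
    (hG : Measurable G) (hG_top : ∀ᵐ y ∂ν, G y ≠ ⊤) {p : ℝ} (hp : 1 < p) :
    ∫⁻ y, G y ^ p ∂ν = ENNReal.ofReal (p - 1) * ∫⁻ t in Set.Ioi (0 : ℝ),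
      (∫⁻ y in {y | ENNReal.ofReal t < G y}, G y ∂ν) * ENNReal.ofReal (t ^ (p - 1 - 1)) := by
  have hp1 : 0 < p - 1 := sub_pos.2 hp
  have hG_mul (y : Y) : G y ^ p = G y * G y ^ (p - 1) := by
    nth_rw 2 [← ENNReal.rpow_one (G y)]
    rw [← ENNReal.rpow_add_of_nonneg _ _ zero_le_one hp1.le, add_sub_cancel]
  have hdensity : ∫⁻ y, G y ^ p ∂ν = ∫⁻ y, G y ^ (p - 1) ∂ν.withDensity G := by
    rw [lintegral_withDensity_eq_lintegral_mul _ hG (hG.pow_const _)]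
    exact lintegral_congr hG_mul
  simp only [hdensity, lintegral_rpow_eq_lintegral_meas_ofReal_lt_mul hG.aemeasurable
    ((withDensity_absolutelyContinuous ν G).ae_le hG_top) hp1,
    withDensity_apply G (measurableSet_lt measurable_const hG)]

theorem lintegral_rpow_le_of_mul_meas_lt_le_setLIntegral {F : X → ℝ≥0∞} {G : Y → ℝ≥0∞}
    (hF : AEMeasurable F μ) (hF_top : ∀ᵐ x ∂μ, F x ≠ ⊤)
    (hG : Measurable G) (hG_top : ∀ᵐ y ∂ν, G y ≠ ⊤) {p : ℝ} (hp : 1 < p) {c : ℝ≥0∞}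
    (h : ∀ t : ℝ, 0 < t → ENNReal.ofReal t * μ {x | ENNReal.ofReal t < F x} ≤
      c * ∫⁻ y in {y | ENNReal.ofReal t < G y}, G y ∂ν) :
    ∫⁻ x, F x ^ p ∂μ ≤ ENNReal.ofReal (p / (p - 1)) * c * ∫⁻ y, G y ^ p ∂ν := by
  have hp1 : 0 < p - 1 := sub_pos.2 hp
  set I : ℝ → ℝ≥0∞ := fun t => ∫⁻ y in {y | ENNReal.ofReal t < G y}, G y ∂ν
  have hI : Measurable I := Antitone.measurable fun _ _ hst => lintegral_mono_set fun _ hy =>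
    (ENNReal.ofReal_le_ofReal hst).trans_lt hy
  have hlevel (t : ℝ) (ht : 0 < t) :
      μ {x | ENNReal.ofReal t < F x} * ENNReal.ofReal (t ^ (p - 1)) ≤
        c * (I t * ENNReal.ofReal (t ^ (p - 1 - 1))) := by
    have ht_pow : ENNReal.ofReal (t ^ (p - 1)) =
        ENNReal.ofReal t * ENNReal.ofReal (t ^ (p - 1 - 1)) := by
      rw [← ENNReal.ofReal_mul ht.le, Real.rpow_sub_one ht.ne' (p - 1), mul_div_cancel₀ _ ht.ne']
    rw [ht_pow, ← mul_assoc, ← mul_assoc, mul_comm (μ _)]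
    gcongr ?_ * _
    exact h t ht
  have hp_eq : ENNReal.ofReal p = ENNReal.ofReal (p / (p - 1)) * ENNReal.ofReal (p - 1) := by
    rw [← ENNReal.ofReal_mul' hp1.le, div_mul_cancel₀ _ hp1.ne']
  calc ∫⁻ x, F x ^ p ∂μ
      = ENNReal.ofReal p * ∫⁻ t in Set.Ioi (0 : ℝ),
          μ {x | ENNReal.ofReal t < F x} * ENNReal.ofReal (t ^ (p - 1)) :=
        lintegral_rpow_eq_lintegral_meas_ofReal_lt_mul hF hF_top (by linarith)
    _ ≤ ENNReal.ofReal p * ∫⁻ t in Set.Ioi (0 : ℝ),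
          c * (I t * ENNReal.ofReal (t ^ (p - 1 - 1))) := by
        gcongr ENNReal.ofReal p * ?_
        exact setLIntegral_mono' measurableSet_Ioi hlevel
    _ = ENNReal.ofReal (p / (p - 1)) * c * (ENNReal.ofReal (p - 1) *
          ∫⁻ t in Set.Ioi (0 : ℝ), I t * ENNReal.ofReal (t ^ (p - 1 - 1))) := by
        rw [lintegral_const_mul _ (by fun_prop), hp_eq]
        ring
    _ = ENNReal.ofReal (p / (p - 1)) * c * ∫⁻ y, G y ^ p ∂ν := by
        rw [lintegral_rpow_eq_lintegral_setLIntegral_ofReal_lt_mul hG hG_top hp]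

end LayerCake

section Cube

open Finset

variable {n : ℕ}

/-- The discrete cube `{i ∈ ℤⁿ : |i - j|_∞ ≤ N}` over which maximal functions average. -/
noncomputable def cube (j : Fin n → ℤ) (N : ℕ) : Finset (Fin n → ℤ) :=
  Icc (fun k => j k - (N : ℤ)) (fun k => j k + (N : ℤ))

theorem coe_cube (j : Fin n → ℤ) (N : ℕ) :
    (cube j N : Set (Fin n → ℤ)) = Metric.closedBall j N := by
  ext i
  have hN : (0 : ℝ) ≤ N := N.cast_nonneg
  simp only [cube, coe_Icc, Set.mem_Icc, Pi.le_def, ← forall_and, Metric.mem_closedBall,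
    dist_pi_le_iff hN, Int.dist_eq, abs_le]
  refine forall_congr' fun k => ?_
  norm_cast
  lia

theorem card_cube (j : Fin n → ℤ) (N : ℕ) : #(cube j N) = (2 * N + 1) ^ n := by
  have hside (k : Fin n) : (j k + (N : ℤ) + 1 - (j k - N)).toNat = 2 * N + 1 := by lia
  simp [cube, Pi.card_Icc, hside]

theorem card_cube_pos (j : Fin n → ℤ) (N : ℕ) : 0 < #(cube j N) := by
  rw [card_cube]
  positivity

theorem natCast_card_cube_ne_zero (j : Fin n → ℤ) (N : ℕ) : (#(cube j N) : ℝ≥0∞) ≠ 0 :=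
  Nat.cast_ne_zero.2 (card_cube_pos j N).ne'

theorem card_cube_four_mul_le (j : Fin n → ℤ) (N : ℕ) :
    #(cube j (4 * N)) ≤ 4 ^ n * #(cube j N) := by
  rw [card_cube, card_cube, ← mul_pow]
  gcongr
  lia

theorem exists_disjoint_cubes_card_le (K : Finset (Fin n → ℤ)) (N : (Fin n → ℤ) → ℕ) :
    ∃ u ⊆ K, (u : Set (Fin n → ℤ)).PairwiseDisjoint (fun j => cube j (N j)) ∧
      #K ≤ 4 ^ n * ∑ j ∈ u, #(cube j (N j)) := by
  obtain ⟨u, huK, hdisj, hcover⟩ := Vitali.exists_disjoint_subfamily_covering_enlargement_closedBall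
    (K : Set (Fin n → ℤ)) id (fun j => (N j : ℝ)) (K.sup N : ℕ)
    (fun j hj => Nat.cast_le.2 (Finset.le_sup hj)) 4 (by norm_num)
  lift u to Finset (Fin n → ℤ) using K.finite_toSet.subset huK
  refine ⟨u, mod_cast huK, fun i hi j hj hij => ?_, ?_⟩
  · rw [Function.onFun, ← disjoint_coe, coe_cube, coe_cube]
    exact hdisj hi hj hij
  have hsub : K ⊆ u.biUnion fun j => cube j (4 * N j) := fun i hi => by
    obtain ⟨j, hj, hij⟩ := hcover i hi
    refine mem_biUnion.2 ⟨j, hj, ?_⟩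
    rw [← mem_coe, coe_cube]
    push_cast
    exact hij (Metric.mem_closedBall_self (Nat.cast_nonneg _))
  calc #K ≤ ∑ j ∈ u, #(cube j (4 * N j)) := (card_le_card hsub).trans card_biUnion_le
    _ ≤ ∑ j ∈ u, 4 ^ n * #(cube j (N j)) := sum_le_sum fun j _ => card_cube_four_mul_le j (N j)
    _ = 4 ^ n * ∑ j ∈ u, #(cube j (N j)) := (mul_sum ..).symm

end Cube

section FracMax

open Finset MeasureTheory

variable {n : ℕ}

/-- The fractional maximal function of order `θ * n`, for `ℝ≥0∞`-valued sequences. Normalising by a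
power of the cardinality of the cube makes `θ = 0` the Hardy-Littlewood maximal function and
`θ = 1 / p` the order at which Hölder's inequality bounds it by the `ℓ^p` norm. -/
noncomputable def fracMax (θ : ℝ) (f : (Fin n → ℤ) → ℝ≥0∞) (j : Fin n → ℤ) : ℝ≥0∞ :=
  ⨆ N : ℕ, (#(cube j N) : ℝ≥0∞) ^ (θ - 1) * ∑ i ∈ cube j N, f i

theorem Mfr_eq_fracMax (hn : n ≠ 0) (α : ℝ) (b : (Fin n → ℤ) → ℝ) (j : Fin n → ℤ) :
    Mfr α b j = fracMax (α / n) (fun i => ENNReal.ofReal |b i|) j := by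
  refine iSup_congr fun N => ?_
  have hside : (0 : ℝ) < 2 * N + 1 := by positivity
  have hcard : (#(cube j N) : ℝ≥0∞) = ENNReal.ofReal (2 * N + 1) ^ (n : ℝ) := by
    rw [card_cube, ENNReal.rpow_natCast, ← ENNReal.ofReal_natCast, ← ENNReal.ofReal_pow hside.le]
    push_cast
    rfl
  have hexp : (n : ℝ) * (α / n - 1) = α - n := by field_simp
  rw [ENNReal.ofReal_mul (by positivity), ENNReal.ofReal_sum_of_nonneg fun _ _ => abs_nonneg _,
    ← ENNReal.ofReal_rpow_of_pos hside, hcard, ← ENNReal.rpow_mul, hexp]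
  rfl

theorem le_fracMax (θ : ℝ) (f : (Fin n → ℤ) → ℝ≥0∞) (j : Fin n → ℤ) (N : ℕ) :
    (#(cube j N) : ℝ≥0∞) ^ (θ - 1) * ∑ i ∈ cube j N, f i ≤ fracMax θ f j :=
  le_iSup (fun N : ℕ => (#(cube j N) : ℝ≥0∞) ^ (θ - 1) * ∑ i ∈ cube j N, f i) N

theorem fracMax_mono_left {θ₀ θ₁ : ℝ} (hθ : θ₀ ≤ θ₁) (f : (Fin n → ℤ) → ℝ≥0∞) (j : Fin n → ℤ) :
    fracMax θ₀ f j ≤ fracMax θ₁ f j := by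
  refine iSup_mono fun N => ?_
  gcongr
  exact Nat.one_le_cast.2 (card_cube_pos j N)

theorem fracMax_convexComb_le {s : ℝ} (hs₀ : 0 ≤ s) (hs₁ : s ≤ 1) (θ₀ θ₁ : ℝ)
    (f : (Fin n → ℤ) → ℝ≥0∞) (j : Fin n → ℤ) :
    fracMax ((1 - s) * θ₀ + s * θ₁) f j ≤ fracMax θ₀ f j ^ (1 - s) * fracMax θ₁ f j ^ s := by
  refine iSup_le fun N => ?_
  have hs₁' : 0 ≤ 1 - s := sub_nonneg.2 hs₁
  set V : ℝ≥0∞ := ((#(cube j N) : ℕ) : ℝ≥0∞)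
  set S := ∑ i ∈ cube j N, f i
  have hV : V ^ ((1 - s) * θ₀ + s * θ₁ - 1) = (V ^ (θ₀ - 1)) ^ (1 - s) * (V ^ (θ₁ - 1)) ^ s := by
    rw [← ENNReal.rpow_mul, ← ENNReal.rpow_mul,
      ← ENNReal.rpow_add _ _ (natCast_card_cube_ne_zero j N) (ENNReal.natCast_ne_top _)]
    congr 1
    ring
  have hS : S = S ^ (1 - s) * S ^ s := by
    rw [← ENNReal.rpow_add_of_nonneg _ _ hs₁' hs₀, sub_add_cancel, ENNReal.rpow_one]
  calc V ^ ((1 - s) * θ₀ + s * θ₁ - 1) * S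
      = (V ^ (θ₀ - 1)) ^ (1 - s) * (V ^ (θ₁ - 1)) ^ s * (S ^ (1 - s) * S ^ s) := by rw [hV, ← hS]
    _ = (V ^ (θ₀ - 1) * S) ^ (1 - s) * (V ^ (θ₁ - 1) * S) ^ s := by
        rw [ENNReal.mul_rpow_of_nonneg _ _ hs₁', ENNReal.mul_rpow_of_nonneg _ _ hs₀,
          mul_mul_mul_comm]
    _ ≤ fracMax θ₀ f j ^ (1 - s) * fracMax θ₁ f j ^ s := by
        gcongr <;> exact le_fracMax ..

theorem fracMax_one_div_le_rpow_tsum {p : ℝ} (hp : 1 ≤ p) (f : (Fin n → ℤ) → ℝ≥0∞) (j : Fin n → ℤ) :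
    fracMax (1 / p) f j ≤ (∑' i, f i ^ p) ^ (1 / p) := by
  have hp0 : 0 < p := by linarith
  refine iSup_le fun N => ?_
  set V : ℝ≥0∞ := ((#(cube j N) : ℕ) : ℝ≥0∞)
  have hexp : (1 / p - 1) * p + (p - 1) = 0 := by field_simp; ring
  rw [one_div, ENNReal.le_rpow_inv_iff hp0, ← one_div, ENNReal.mul_rpow_of_nonneg _ _ hp0.le,
    ← ENNReal.rpow_mul]
  calc V ^ ((1 / p - 1) * p) * (∑ i ∈ cube j N, f i) ^ p
      ≤ V ^ ((1 / p - 1) * p) * (V ^ (p - 1) * ∑ i ∈ cube j N, f i ^ p) := by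
        gcongr
        exact ENNReal.rpow_sum_le_const_mul_sum_rpow _ _ hp
    _ = ∑ i ∈ cube j N, f i ^ p := by
        rw [← mul_assoc, ← ENNReal.rpow_add _ _ (natCast_card_cube_ne_zero j N)
          (ENNReal.natCast_ne_top _), hexp, ENNReal.rpow_zero, one_mul]
    _ ≤ ∑' i, f i ^ p := ENNReal.sum_le_tsum _

theorem fracMax_le_fracMax_zero_rpow_mul {θ p : ℝ} (hθ : 0 ≤ θ) (hp : 1 ≤ p) (hθp : θ * p ≤ 1)
    (f : (Fin n → ℤ) → ℝ≥0∞) (j : Fin n → ℤ) :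
    fracMax θ f j ≤ fracMax 0 f j ^ (1 - θ * p) * (∑' i, f i ^ p) ^ θ := by
  have hp0 : 0 < p := by linarith
  have hθ_eq : (1 - θ * p) * 0 + θ * p * (1 / p) = θ := by field_simp; ring
  calc fracMax θ f j
      ≤ fracMax 0 f j ^ (1 - θ * p) * fracMax (1 / p) f j ^ (θ * p) := by
        simpa only [hθ_eq] using fracMax_convexComb_le (mul_nonneg hθ hp0.le) hθp 0 (1 / p) f j
    _ ≤ fracMax 0 f j ^ (1 - θ * p) * ((∑' i, f i ^ p) ^ (1 / p)) ^ (θ * p) := by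
        gcongr
        exact fracMax_one_div_le_rpow_tsum hp f j
    _ = fracMax 0 f j ^ (1 - θ * p) * (∑' i, f i ^ p) ^ θ := by
        rw [← ENNReal.rpow_mul]
        congr 2
        field_simp

theorem fracMax_zero_eq_iSup_div (f : (Fin n → ℤ) → ℝ≥0∞) (j : Fin n → ℤ) :
    fracMax 0 f j = ⨆ N, (∑ i ∈ cube j N, f i) / #(cube j N) := by
  simp only [fracMax, zero_sub, ENNReal.rpow_neg_one, ENNReal.div_eq_inv_mul]

theorem fracMax_zero_le_add {f g : (Fin n → ℤ) → ℝ≥0∞} {s : ℝ≥0∞} (h : ∀ i, f i ≤ g i + s)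
    (j : Fin n → ℤ) : fracMax 0 f j ≤ fracMax 0 g j + s := by
  simp only [fracMax_zero_eq_iSup_div]
  refine iSup_le fun N => ?_
  calc (∑ i ∈ cube j N, f i) / #(cube j N) ≤ (∑ i ∈ cube j N, (g i + s)) / #(cube j N) := by
        gcongr with i
        exact h i
    _ = (∑ i ∈ cube j N, g i) / #(cube j N) + s := by
        rw [sum_add_distrib, sum_const, nsmul_eq_mul, ENNReal.add_div, mul_div_assoc,
          ENNReal.mul_div_cancel (natCast_card_cube_ne_zero j N) (ENNReal.natCast_ne_top _)]
    _ ≤ (⨆ N, (∑ i ∈ cube j N, g i) / #(cube j N)) + s := by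
        gcongr
        exact le_iSup (fun N => (∑ i ∈ cube j N, g i) / #(cube j N)) N

theorem mul_card_le_of_lt_fracMax_zero (f : (Fin n → ℤ) → ℝ≥0∞) {t : ℝ≥0∞}
    (K : Finset (Fin n → ℤ)) (hK : ∀ j ∈ K, t < fracMax 0 f j) :
    t * #K ≤ 4 ^ n * ∑' i, f i := by
  simp only [fracMax_zero_eq_iSup_div, lt_iSup_iff] at hK
  choose! N hN using hK
  obtain ⟨u, huK, hdisj, hcard⟩ := exists_disjoint_cubes_card_le K N
  have hcard' : (#K : ℝ≥0∞) ≤ 4 ^ n * ∑ j ∈ u, (#(cube j (N j)) : ℝ≥0∞) := mod_cast hcard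
  calc t * #K ≤ t * (4 ^ n * ∑ j ∈ u, (#(cube j (N j)) : ℝ≥0∞)) := by gcongr
    _ = 4 ^ n * ∑ j ∈ u, t * #(cube j (N j)) := by rw [← mul_sum]; ring
    _ ≤ 4 ^ n * ∑ j ∈ u, ∑ i ∈ cube j (N j), f i := by
        gcongr with j hj
        exact ENNReal.mul_le_of_le_div (hN j (huK hj)).le
    _ = 4 ^ n * ∑ i ∈ u.biUnion fun j => cube j (N j), f i := by rw [sum_biUnion hdisj]
    _ ≤ 4 ^ n * ∑' i, f i := by
        gcongr
        exact ENNReal.sum_le_tsum _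

theorem mul_count_lt_fracMax_zero_le (f : (Fin n → ℤ) → ℝ≥0∞) (t : ℝ≥0∞) :
    t * Measure.count {j | t < fracMax 0 f j} ≤ 4 ^ n * ∑' i, f i := by
  rw [← lintegral_indicator_one .of_discrete, lintegral_count, ENNReal.tsum_eq_iSup_sum,
    ENNReal.mul_iSup]
  refine iSup_le fun K => ?_
  have hcard : ∑ j ∈ K, {j | t < fracMax 0 f j}.indicator (1 : (Fin n → ℤ) → ℝ≥0∞) j =
      #{j ∈ K | t < fracMax 0 f j} := by
    simp [Set.indicator]
  rw [hcard]
  exact mul_card_le_of_lt_fracMax_zero f _ fun j hj => (mem_filter.1 hj).2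

theorem mul_count_lt_fracMax_zero_le_setLIntegral (f : (Fin n → ℤ) → ℝ≥0∞) (t : ℝ≥0∞) :
    t * Measure.count {j | t < fracMax 0 f j} ≤
      4 ^ n * ∫⁻ i in {i | t < 2 * f i}, 2 * f i ∂Measure.count := by
  set E := {i | t < 2 * f i}
  have htrunc (i : Fin n → ℤ) : f i ≤ E.indicator f i + t / 2 := by
    by_cases hi : i ∈ E
    · simp [hi]
    · rw [Set.indicator_of_notMem hi, zero_add, ENNReal.le_div_iff_mul_le (by simp) (by simp),
        mul_comm]
      exact not_lt.1 hi
  have hsub : {j | t < fracMax 0 f j} ⊆ {j | t / 2 < fracMax 0 (E.indicator f) j} := fun j hj => by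
    by_contra hle
    refine (lt_self_iff_false t).1 ?_
    calc t < fracMax 0 f j := hj
      _ ≤ fracMax 0 (E.indicator f) j + t / 2 := fracMax_zero_le_add htrunc j
      _ ≤ t / 2 + t / 2 := by gcongr; exact not_lt.1 hle
      _ = t := ENNReal.add_halves t
  calc t * Measure.count {j | t < fracMax 0 f j}
      ≤ t * Measure.count {j | t / 2 < fracMax 0 (E.indicator f) j} := by gcongr
    _ = 2 * (t / 2 * Measure.count {j | t / 2 < fracMax 0 (E.indicator f) j}) := by
        rw [← mul_assoc, ENNReal.mul_div_cancel (by simp) (by simp)]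
    _ ≤ 2 * (4 ^ n * ∑' i, E.indicator f i) := by
        gcongr 2 * ?_
        exact mul_count_lt_fracMax_zero_le _ _
    _ = 4 ^ n * ∫⁻ i in E, 2 * f i ∂Measure.count := by
        rw [lintegral_const_mul _ .of_discrete, ← lintegral_indicator .of_discrete, lintegral_count,
          mul_left_comm]

/-- A bound for the `p`-th power of the operator norm of the Hardy-Littlewood maximal operator on
`ℓ^p(ℤⁿ)`: the Vitali constant `4 ^ n`, times `2 ^ p` from truncating at half the level, times the
factor `p / (p - 1)` of the layer cake integration. -/
noncomputable def maximalConst (n : ℕ) (p : ℝ) : ℝ :=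
  4 ^ n * 2 ^ p * (p / (p - 1))

theorem maximalConst_pos (n : ℕ) {p : ℝ} (hp : 1 < p) : 0 < maximalConst n p := by
  have : 0 < p / (p - 1) := div_pos (by linarith) (sub_pos.2 hp)
  unfold maximalConst
  positivity

theorem tsum_fracMax_zero_rpow_le {p : ℝ} (hp : 1 < p) (f : (Fin n → ℤ) → ℝ≥0∞) :
    ∑' j, fracMax 0 f j ^ p ≤ ENNReal.ofReal (maximalConst n p) * ∑' i, f i ^ p := by
  have hp0 : 0 < p := by linarith
  obtain hT | hT := eq_or_ne (∑' i, f i ^ p) ⊤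
  · simp [hT, maximalConst_pos n hp, ENNReal.mul_top]
  have hM_top (j : Fin n → ℤ) : fracMax 0 f j ≠ ⊤ :=
    ne_top_of_le_ne_top (ENNReal.rpow_ne_top_of_nonneg (by positivity) hT)
      ((fracMax_mono_left (by positivity) f j).trans (fracMax_one_div_le_rpow_tsum hp.le f j))
  have hf_top (i : Fin n → ℤ) : 2 * f i ≠ ⊤ := by
    have := ENNReal.ne_top_of_tsum_ne_top hT i
    simpa [ENNReal.mul_eq_top, hp0, hp0.not_gt] using this
  have hstrong := lintegral_rpow_le_of_mul_meas_lt_le_setLIntegral (μ := Measure.count)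
    (Measurable.of_discrete (f := fracMax 0 f)).aemeasurable (.of_forall hM_top)
    (Measurable.of_discrete (f := fun i => 2 * f i)) (.of_forall hf_top) hp
    fun t _ => mul_count_lt_fracMax_zero_le_setLIntegral f (ENNReal.ofReal t)
  have hconst : ENNReal.ofReal (maximalConst n p) =
      ENNReal.ofReal (p / (p - 1)) * 4 ^ n * 2 ^ p := by
    rw [maximalConst, mul_comm, ENNReal.ofReal_mul' (by positivity),
      ENNReal.ofReal_mul (by positivity), ← ENNReal.ofReal_rpow_of_pos two_pos,
      ENNReal.ofReal_pow (by positivity), ENNReal.ofReal_ofNat, ENNReal.ofReal_ofNat, mul_assoc]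
  simpa only [hconst, lintegral_count, ENNReal.mul_rpow_of_nonneg _ _ hp0.le,
    ENNReal.tsum_mul_left, ← mul_assoc] using hstrong

theorem rpow_tsum_fracMax_rpow_le {θ p q : ℝ} (hθ : 0 ≤ θ) (hp : 1 < p) (hq0 : 0 < q)
    (hq : 1 / q = 1 / p - θ) (f : (Fin n → ℤ) → ℝ≥0∞) :
    (∑' j, fracMax θ f j ^ q) ^ (1 / q) ≤
      ENNReal.ofReal (maximalConst n p) ^ (1 / q) * (∑' i, f i ^ p) ^ (1 / p) := by
  set A := ENNReal.ofReal (maximalConst n p)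
  set T := ∑' i, f i ^ p
  have hp0 : 0 < p := by linarith
  have hpq : 1 - θ * p = p / q := by
    rw [div_eq_mul_one_div p q, hq, mul_sub, mul_one_div_cancel hp0.ne', mul_comm]
  have hθp : θ * p ≤ 1 := by
    rw [← sub_nonneg, hpq]
    positivity
  have hq0' : 0 ≤ 1 / q := by positivity
  calc (∑' j, fracMax θ f j ^ q) ^ (1 / q)
      ≤ (∑' j, (fracMax 0 f j ^ (1 - θ * p) * T ^ θ) ^ q) ^ (1 / q) := by
        gcongr with j
        exact fracMax_le_fracMax_zero_rpow_mul hθ hp.le hθp f j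
    _ = ((∑' j, fracMax 0 f j ^ p) * T ^ (θ * q)) ^ (1 / q) := by
        simp only [ENNReal.mul_rpow_of_nonneg _ _ hq0.le, ← ENNReal.rpow_mul, hpq,
          div_mul_cancel₀ _ hq0.ne', ENNReal.tsum_mul_right]
    _ ≤ (A * T * T ^ (θ * q)) ^ (1 / q) := by
        gcongr
        exact tsum_fracMax_zero_rpow_le hp f
    _ = A ^ (1 / q) * T ^ (1 / p) := by
        rw [mul_assoc, ENNReal.mul_rpow_of_nonneg _ _ hq0', ENNReal.mul_rpow_of_nonneg _ _ hq0',
          ← ENNReal.rpow_mul, mul_assoc θ, mul_one_div_cancel hq0.ne', mul_one,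
          ← ENNReal.rpow_add_of_nonneg _ _ hq0' hθ, hq, sub_add_cancel]

end FracMax

theorem stmt1 (n : ℕ) (hn : 1 ≤ n) (α : ℝ) (hα0 : 0 ≤ α) (hαn : α < n)
    (p q : ℝ) (hp : 1 < p) (hpn : α * p < n) (hq : 1 / q = 1 / p - α / n) :
    ∃ C : ℝ, 0 < C ∧ ∀ b : (Fin n → ℤ) → ℝ,
      (∑' j : Fin n → ℤ, (Mfr α b j) ^ q) ^ (1 / q) ≤ ENNReal.ofReal C * lpNorm p b := by
  have hn0 : (0 : ℝ) < n := by exact_mod_cast hn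
  have hp0 : 0 < p := by linarith
  have hq0 : 0 < q := by
    rw [← one_div_pos, hq, sub_pos, div_lt_div_iff₀ hn0 hp0]
    linarith
  have hA : 0 < maximalConst n p := maximalConst_pos n hp
  refine ⟨maximalConst n p ^ (1 / q), Real.rpow_pos_of_pos hA _, fun b => ?_⟩
  rw [← ENNReal.ofReal_rpow_of_pos hA, lpNorm]
  simp only [Mfr_eq_fracMax (Nat.one_le_iff_ne_zero.1 hn)]
  exact rpow_tsum_fracMax_rpow_le (by positivity) hp hq0 hq _
end

section
/- Let 0 ≤ α < n and m ∈ ℕ with m > 1 − α/n, and let T_{α,m} be the discrete fractional series operator. If 1 < p < n/α (with n/0 = ∞) and 1/q = 1/p − α/n, then there exists a constant C > 0 such that ‖T_{α,m} b‖_{ℓ^q(ℤ^n)} ≤ C ‖b‖_{ℓ^p(ℤ^n)} for all b ∈ ℓ^p(ℤ^n). -/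
open scoped ENNReal BigOperators Classical

/-!
By duality it suffices to bound `∑ K(i, j) f(i) g(j)` for `f` and `g` in the unit balls of `ℓ^p` and
`ℓ^{q'}`, where `K(i, j) = ∏ₗ |i - Aₗ j|^{-αₗ}`. Say that the `k`-th factor `|i - Aₖ j|` is the
smallest one.

If `α > 0`, replacing every factor by the smallest gives `K ≤ ∑ₖ |i - Aₖ j|^{-(n - α)}`, and each
term is controlled by the Hardy–Littlewood–Sobolev inequality. If `α = 0`, this would lose the
logarithmically divergent `|i - Aₖ j|^{-n}`. But for `l ≠ k` the matrix `Aₗ - Aₖ` is invertible and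
`|(Aₗ - Aₖ) j| ≤ 2 |i - Aₗ j|`, so `|i - Aₗ j|` dominates `|j|`, hence also `|i| + |Aₖ j|`. Thus `K`
is bounded by a multiple of `∑ₖ |i - Aₖ j|^{-αₖ} (|i| + |Aₖ j|)^{-(n - αₖ)}`; here `αₖ < n` because
`m > 1`, and Schur's test with power weights applies.

Both estimates use the lattice only through the bound `A R ^ n` for the number of points in balls.
Distances `|v|` are replaced by `1 + ‖v‖` with the sup norm, which is comparable for `v ≠ 0`.
-/

open scoped NNReal

section BilinearForms

variable {X Y : Type*} {K K' : X → Y → ℝ≥0} {p q r : ℝ}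

/-- The bilinear form with kernel `K` is bounded on `ℓ^p × ℓ^r`. Since `K ≥ 0`, it suffices to test
finite sums of nonnegative sequences, normalised to lie in the unit balls. -/
def BilinearBounded (K : X → Y → ℝ≥0) (p r : ℝ) : Prop :=
  ∃ C : ℝ≥0, ∀ (I : Finset X) (J : Finset Y) (f : X → ℝ≥0) (g : Y → ℝ≥0),
    ∑ i ∈ I, f i ^ p ≤ 1 → ∑ j ∈ J, g j ^ r ≤ 1 → ∑ i ∈ I, ∑ j ∈ J, K i j * (f i * g j) ≤ C

lemma BilinearBounded.sum {κ : Type*} {s : Finset κ} {K : κ → X → Y → ℝ≥0}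
    (h : ∀ k, BilinearBounded (K k) p r) : BilinearBounded (fun i j => ∑ k ∈ s, K k i j) p r := by
  choose C hC using h
  refine ⟨∑ k ∈ s, C k, fun I J f g hf hg => ?_⟩
  calc ∑ i ∈ I, ∑ j ∈ J, (∑ k ∈ s, K k i j) * (f i * g j)
      = ∑ k ∈ s, ∑ i ∈ I, ∑ j ∈ J, K k i j * (f i * g j) := by
        simp only [Finset.sum_mul, Finset.sum_comm (t := s)]
    _ ≤ ∑ k ∈ s, C k := Finset.sum_le_sum fun k _ => hC k I J f g hf hg

lemma BilinearBounded.of_le_mul {D : ℝ≥0} (h : BilinearBounded K' p r)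
    (hK : ∀ i j, K i j ≤ D * K' i j) : BilinearBounded K p r := by
  obtain ⟨C, hC⟩ := h
  refine ⟨D * C, fun I J f g hf hg => ?_⟩
  calc ∑ i ∈ I, ∑ j ∈ J, K i j * (f i * g j)
      ≤ ∑ i ∈ I, ∑ j ∈ J, D * K' i j * (f i * g j) := by gcongr; exact hK _ _
    _ = D * ∑ i ∈ I, ∑ j ∈ J, K' i j * (f i * g j) := by simp only [Finset.mul_sum, mul_assoc]
    _ ≤ D * C := by gcongr; exact hC I J f g hf hg

lemma BilinearBounded.exists_Lp_sum_le_of_sum_le_one (h : BilinearBounded K p r)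
    (hqr : q.HolderConjugate r) :
    ∃ C : ℝ≥0, ∀ (I : Finset X) (J : Finset Y) (f : X → ℝ≥0), ∑ i ∈ I, f i ^ p ≤ 1 →
      (∑ j ∈ J, (∑ i ∈ I, K i j * f i) ^ q) ^ (1 / q) ≤ C := by
  obtain ⟨C, hC⟩ := h
  refine ⟨C, fun I J f hf => ?_⟩
  obtain ⟨g, hg, hgF⟩ := (NNReal.isGreatest_Lp J (fun j => ∑ i ∈ I, K i j * f i) hqr).1
  calc (∑ j ∈ J, (∑ i ∈ I, K i j * f i) ^ q) ^ (1 / q)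
      = ∑ j ∈ J, (∑ i ∈ I, K i j * f i) * g j := hgF.symm
    _ = ∑ i ∈ I, ∑ j ∈ J, K i j * (f i * g j) := by
        simp only [Finset.sum_mul, mul_assoc]
        exact Finset.sum_comm
    _ ≤ C := hC I J f g hf hg

lemma BilinearBounded.exists_Lp_sum_le (h : BilinearBounded K p r) (hp : 0 < p)
    (hqr : q.HolderConjugate r) :
    ∃ C : ℝ≥0, ∀ (I : Finset X) (J : Finset Y) (f : X → ℝ≥0),
      (∑ j ∈ J, (∑ i ∈ I, K i j * f i) ^ q) ^ (1 / q) ≤ C * (∑ i ∈ I, f i ^ p) ^ (1 / p) := by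
  obtain ⟨C, hC⟩ := h.exists_Lp_sum_le_of_sum_le_one hqr
  refine ⟨C, fun I J f => ?_⟩
  set S := ∑ i ∈ I, f i ^ p
  set N := S ^ (1 / p)
  have hN : N ^ p = S := by rw [← NNReal.rpow_mul, one_div_mul_cancel hp.ne', NNReal.rpow_one]
  have hf_le : ∀ i ∈ I, f i ≤ N := fun i hi => by
    rw [← NNReal.rpow_le_rpow_iff hp, hN]
    exact Finset.single_le_sum (f := fun i => f i ^ p) (fun _ _ => zero_le) hi
  have hf_eq : ∀ i ∈ I, N * (f i / N) = f i := fun i hi =>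
    mul_div_cancel_of_imp' fun h0 => le_zero_iff.1 (h0 ▸ hf_le i hi)
  have hf_norm : ∑ i ∈ I, (f i / N) ^ p ≤ 1 := by
    simp only [NNReal.div_rpow, hN, ← Finset.sum_div]
    exact div_self_le_one S
  have hscale : ∀ j, ∑ i ∈ I, K i j * f i = N * ∑ i ∈ I, K i j * (f i / N) := fun j => by
    rw [Finset.mul_sum]
    refine Finset.sum_congr rfl fun i hi => ?_
    rw [mul_left_comm, hf_eq i hi]
  simp only [hscale, NNReal.mul_rpow, ← Finset.mul_sum]
  rw [← NNReal.rpow_mul, mul_one_div_cancel hqr.ne_zero, NNReal.rpow_one, mul_comm]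
  gcongr
  exact hC I J _ hf_norm

theorem BilinearBounded.exists_Lp_tsum_le (h : BilinearBounded K p r) (hp : 0 < p)
    (hqr : q.HolderConjugate r) :
    ∃ C : ℝ≥0, ∀ f : X → ℝ≥0,
      (∑' j, (∑' i, (↑(K i j * f i) : ℝ≥0∞)) ^ q) ^ (1 / q) ≤
        C * (∑' i, (f i : ℝ≥0∞) ^ p) ^ (1 / p) := by
  obtain ⟨C, hC⟩ := h.exists_Lp_sum_le hp hqr
  refine ⟨C, fun f => ?_⟩
  rw [one_div q, ENNReal.rpow_inv_le_iff hqr.pos, ENNReal.tsum_eq_iSup_sum]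
  refine iSup_le fun J => ?_
  have hlim : Filter.Tendsto
      (fun I : Finset X => ∑ j ∈ J, (∑ i ∈ I, (↑(K i j * f i) : ℝ≥0∞)) ^ q) Filter.atTop
      (nhds (∑ j ∈ J, (∑' i, (↑(K i j * f i) : ℝ≥0∞)) ^ q)) :=
    tendsto_finsetSum _ fun j _ =>
      (ENNReal.continuous_rpow_const.tendsto _).comp ENNReal.summable.hasSum
  refine le_of_tendsto' hlim fun I => ?_
  rw [← ENNReal.rpow_inv_le_iff hqr.pos, ← one_div]
  have hfin := ENNReal.coe_le_coe.2 (hC I J f)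
  push_cast [ENNReal.coe_rpow_of_nonneg, hp.le, hqr.nonneg, one_div_nonneg] at hfin ⊢
  exact hfin.trans (by gcongr; exact ENNReal.sum_le_tsum I)

lemma mul_le_weighted_rpow_add_rpow {x y : ℝ≥0} (hpr : p.HolderConjugate r) (hx : x ≠ 0)
    (hy : y ≠ 0) (a b : ℝ≥0) :
    a * b ≤ a ^ p * (x ^ p)⁻¹ * y ^ p + b ^ r * (y ^ r)⁻¹ * x ^ r := by
  calc a * b = (a * x⁻¹ * y) * (b * y⁻¹ * x) := by field_simp
    _ ≤ (a * x⁻¹ * y) ^ p / p.toNNReal + (b * y⁻¹ * x) ^ r / r.toNNReal :=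
      NNReal.young_inequality_real _ _ hpr
    _ ≤ (a * x⁻¹ * y) ^ p + (b * y⁻¹ * x) ^ r := by
      gcongr
      · exact div_le_self zero_le (Real.one_le_toNNReal.2 hpr.lt.le)
      · exact div_le_self zero_le (Real.one_le_toNNReal.2 hpr.symm.lt.le)
    _ = a ^ p * (x ^ p)⁻¹ * y ^ p + b ^ r * (y ^ r)⁻¹ * x ^ r := by
      simp only [NNReal.mul_rpow, NNReal.inv_rpow]

lemma BilinearBounded.of_schur {u : X → ℝ≥0} {v : Y → ℝ≥0} {C₁ C₂ : ℝ≥0}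
    (hpr : p.HolderConjugate r) (hu : ∀ i, u i ≠ 0) (hv : ∀ j, v j ≠ 0)
    (hrow : ∀ i (J : Finset Y), ∑ j ∈ J, K i j * v j ^ p ≤ C₁ * u i ^ p)
    (hcol : ∀ j (I : Finset X), ∑ i ∈ I, K i j * u i ^ r ≤ C₂ * v j ^ r) :
    BilinearBounded K p r := by
  refine ⟨C₁ + C₂, fun I J f g hf hg => ?_⟩
  calc ∑ i ∈ I, ∑ j ∈ J, K i j * (f i * g j)
      ≤ ∑ i ∈ I, ∑ j ∈ J, K i j *
          (f i ^ p * (u i ^ p)⁻¹ * v j ^ p + g j ^ r * (v j ^ r)⁻¹ * u i ^ r) := by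
        gcongr; exact mul_le_weighted_rpow_add_rpow hpr (hu _) (hv _) _ _
    _ = ∑ i ∈ I, f i ^ p * (u i ^ p)⁻¹ * ∑ j ∈ J, K i j * v j ^ p +
        ∑ j ∈ J, g j ^ r * (v j ^ r)⁻¹ * ∑ i ∈ I, K i j * u i ^ r := by
        simp only [mul_add, Finset.sum_add_distrib, Finset.mul_sum]
        rw [Finset.sum_comm (s := J)]
        simp only [mul_left_comm]
    _ ≤ ∑ i ∈ I, f i ^ p * (u i ^ p)⁻¹ * (C₁ * u i ^ p) +
        ∑ j ∈ J, g j ^ r * (v j ^ r)⁻¹ * (C₂ * v j ^ r) := by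
        gcongr
        · exact hrow _ J
        · exact hcol _ I
    _ = C₁ * ∑ i ∈ I, f i ^ p + C₂ * ∑ j ∈ J, g j ^ r := by
        simp only [Finset.mul_sum]
        congr 1
        · refine Finset.sum_congr rfl fun i _ => ?_
          have := (NNReal.rpow_pos (p := p) (pos_iff_ne_zero.2 (hu i))).ne'
          field_simp
        · refine Finset.sum_congr rfl fun j _ => ?_
          have := (NNReal.rpow_pos (p := r) (pos_iff_ne_zero.2 (hv j))).ne'
          field_simp
    _ ≤ C₁ * 1 + C₂ * 1 := by gcongr
    _ = C₁ + C₂ := by rw [mul_one, mul_one]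

end BilinearForms

section PolynomialGrowth

variable {X : Type*} {ρ : X → ℝ≥0} {A R : ℝ≥0} {d u : ℝ} {L : Finset X}

/-- The sublevel sets `{ρ ≤ R}` of the positive function `ρ` have at most `A R ^ d` elements; thus
`ρ` plays the role of one plus the distance to a fixed point of a `d`-dimensional lattice. -/
structure PolynomialGrowth (ρ : X → ℝ≥0) (A : ℝ≥0) (d : ℝ) : Prop where
  pos : ∀ x, 0 < ρ x
  card_le : ∀ (L : Finset X) (R : ℝ≥0), (∀ x ∈ L, ρ x ≤ R) → (L.card : ℝ≥0) ≤ A * R ^ d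

lemma PolynomialGrowth.comp_injective {Y : Type*} (hρ : PolynomialGrowth ρ A d) {φ : Y → X}
    (hφ : Function.Injective φ) : PolynomialGrowth (ρ ∘ φ) A d where
  pos y := hρ.pos (φ y)
  card_le L R hL := by
    rw [← Finset.card_image_of_injective L hφ]
    exact hρ.card_le _ R (by simpa using hL)

lemma PolynomialGrowth.sum_shell_rpow_neg_le (hρ : PolynomialGrowth ρ A d) (hu : 0 ≤ u)
    (hR : 0 < R) (hlow : ∀ x ∈ L, R / 2 ≤ ρ x) (hupp : ∀ x ∈ L, ρ x ≤ 2 * R) :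
    ∑ x ∈ L, ρ x ^ (-u) ≤ A * 2 ^ d * 2 ^ u * R ^ (d - u) := by
  calc ∑ x ∈ L, ρ x ^ (-u) ≤ L.card • (R / 2) ^ (-u) := Finset.sum_le_card_nsmul _ _ _ fun x hx =>
        NNReal.rpow_le_rpow_of_nonpos (by positivity) (hlow x hx) (neg_nonpos.2 hu)
    _ ≤ A * (2 * R) ^ d * (R / 2) ^ (-u) := by
        rw [nsmul_eq_mul]
        gcongr
        exact hρ.card_le L _ hupp
    _ = A * 2 ^ d * 2 ^ u * R ^ (d - u) := by
        rw [NNReal.mul_rpow, NNReal.div_rpow, NNReal.rpow_neg 2, div_inv_eq_mul, sub_eq_add_neg,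
          NNReal.rpow_add hR.ne']
        ring

lemma PolynomialGrowth.sum_dyadic_rpow_neg_le (hρ : PolynomialGrowth ρ A d) (hu : 0 ≤ u)
    (hR : 0 < R) {y : ℝ≥0} (hy : 0 < y) (hyu : y ^ (d - u) < 1)
    (hL : ∀ x ∈ L, ∃ k : ℕ, R * y ^ k / 2 ≤ ρ x ∧ ρ x ≤ 2 * (R * y ^ k)) :
    ∑ x ∈ L, ρ x ^ (-u) ≤ A * 2 ^ d * 2 ^ u * (1 - y ^ (d - u))⁻¹ * R ^ (d - u) := by
  choose! k hk using hL
  calc ∑ x ∈ L, ρ x ^ (-u) = ∑ t ∈ L.image k, ∑ x ∈ L with k x = t, ρ x ^ (-u) :=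
        (Finset.sum_fiberwise_of_maps_to (fun x hx => Finset.mem_image_of_mem k hx) _).symm
    _ ≤ ∑ t ∈ L.image k, A * 2 ^ d * 2 ^ u * (R * y ^ t) ^ (d - u) := by
        refine Finset.sum_le_sum fun t _ =>
          hρ.sum_shell_rpow_neg_le hu (by positivity) (fun x hx => ?_) fun x hx => ?_
        all_goals obtain ⟨hxL, rfl⟩ := Finset.mem_filter.1 hx
        · exact (hk x hxL).1
        · exact (hk x hxL).2
    _ = A * 2 ^ d * 2 ^ u * R ^ (d - u) * ∑ t ∈ L.image k, (y ^ (d - u)) ^ t := by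
        rw [Finset.mul_sum]
        refine Finset.sum_congr rfl fun t _ => ?_
        rw [NNReal.mul_rpow, ← NNReal.rpow_natCast, ← NNReal.rpow_natCast, ← NNReal.rpow_mul,
          ← NNReal.rpow_mul, mul_comm (t : ℝ)]
        ring
    _ ≤ A * 2 ^ d * 2 ^ u * R ^ (d - u) * (1 - y ^ (d - u))⁻¹ := by
        rw [← NNReal.tsum_geometric hyu]
        gcongr
        exact (NNReal.summable_geometric hyu).sum_le_tsum _ fun _ _ => zero_le
    _ = A * 2 ^ d * 2 ^ u * (1 - y ^ (d - u))⁻¹ * R ^ (d - u) := by ring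

lemma PolynomialGrowth.exists_sum_rpow_neg_le_of_le (A : ℝ≥0) (hu : 0 ≤ u) (hud : u < d) :
    ∃ C : ℝ≥0, ∀ {ρ : X → ℝ≥0}, PolynomialGrowth ρ A d → ∀ {L : Finset X} {R : ℝ≥0}, 0 < R →
      (∀ x ∈ L, ρ x ≤ R) → ∑ x ∈ L, ρ x ^ (-u) ≤ C * R ^ (d - u) := by
  refine ⟨A * 2 ^ d * 2 ^ u * (1 - 2⁻¹ ^ (d - u))⁻¹, fun {ρ} hρ {L R} hR hL => ?_⟩
  refine hρ.sum_dyadic_rpow_neg_le hu hR (by positivity)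
    (NNReal.rpow_lt_one (by norm_num) (sub_pos.2 hud)) fun x hx => ?_
  obtain ⟨k, hle, hlt⟩ := exists_nat_pow_near ((one_le_div (hρ.pos x)).2 (hL x hx)) one_lt_two
  rw [le_div_iff₀ (hρ.pos x)] at hle
  rw [div_lt_iff₀ (hρ.pos x), pow_succ] at hlt
  refine ⟨k, ?_, ?_⟩ <;> rw [inv_pow, ← div_eq_mul_inv]
  · rw [div_div, div_le_iff₀ (by positivity), mul_comm (ρ x)]
    exact hlt.le
  · calc ρ x ≤ R / 2 ^ k := by rwa [le_div_iff₀ (by positivity), mul_comm]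
      _ ≤ 2 * (R / 2 ^ k) := le_mul_of_one_le_left zero_le one_le_two

lemma PolynomialGrowth.exists_sum_rpow_neg_le_of_ge (A : ℝ≥0) (hu : 0 ≤ u) (hud : d < u) :
    ∃ C : ℝ≥0, ∀ {ρ : X → ℝ≥0}, PolynomialGrowth ρ A d → ∀ {L : Finset X} {R : ℝ≥0}, 0 < R →
      (∀ x ∈ L, R ≤ ρ x) → ∑ x ∈ L, ρ x ^ (-u) ≤ C * R ^ (d - u) := by
  refine ⟨A * 2 ^ d * 2 ^ u * (1 - 2 ^ (d - u))⁻¹, fun {ρ} hρ {L R} hR hL => ?_⟩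
  refine hρ.sum_dyadic_rpow_neg_le hu hR two_pos
    (NNReal.rpow_lt_one_of_one_lt_of_neg one_lt_two (sub_neg.2 hud)) fun x hx => ?_
  obtain ⟨k, hle, hlt⟩ := exists_nat_pow_near ((one_le_div hR).2 (hL x hx)) one_lt_two
  rw [le_div_iff₀ hR, mul_comm] at hle
  rw [div_lt_iff₀ hR, pow_succ] at hlt
  exact ⟨k, (half_le_self zero_le).trans hle, hlt.le.trans_eq (by ring)⟩

end PolynomialGrowth

section HardyLittlewoodSobolev

variable {X Y : Type*} {d α p r : ℝ}

lemma PolynomialGrowth.exists_sum_rpow_neg_mul_le_of_le (A : ℝ≥0) (hα : 0 < α) (hαd : α ≤ d) :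
    ∃ C : ℝ≥0, ∀ {ρ : X → ℝ≥0}, PolynomialGrowth ρ A d →
      ∀ {L : Finset X} {g : X → ℝ≥0} {R l : ℝ≥0}, 0 < R → (∀ x ∈ L, ρ x ≤ R) →
      (∀ x ∈ L, g x ≤ l) → ∑ x ∈ L, ρ x ^ (-(d - α)) * g x ≤ C * (R ^ α * l) := by
  obtain ⟨C, hC⟩ :=
    exists_sum_rpow_neg_le_of_le (X := X) A (sub_nonneg.2 hαd) (sub_lt_self d hα)
  refine ⟨C, fun {ρ} hρ {L g R l} hR hL hg => ?_⟩
  calc ∑ x ∈ L, ρ x ^ (-(d - α)) * g x ≤ ∑ x ∈ L, ρ x ^ (-(d - α)) * l := by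
        gcongr with x hx; exact hg x hx
    _ = (∑ x ∈ L, ρ x ^ (-(d - α))) * l := (Finset.sum_mul ..).symm
    _ ≤ C * R ^ (d - (d - α)) * l := by gcongr; exact hC hρ hR hL
    _ = C * (R ^ α * l) := by rw [sub_sub_cancel, mul_assoc]

lemma PolynomialGrowth.exists_sum_rpow_neg_mul_le_of_ge (A : ℝ≥0) (hr : 1 < r) (hαd : α ≤ d)
    (hαr : α < d / r) :
    ∃ C : ℝ≥0, ∀ {ρ : X → ℝ≥0}, PolynomialGrowth ρ A d →
      ∀ {L : Finset X} {g : X → ℝ≥0} {R : ℝ≥0}, 0 < R → (∀ x ∈ L, R ≤ ρ x) →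
      ∑ x ∈ L, g x ^ r ≤ 1 → ∑ x ∈ L, ρ x ^ (-(d - α)) * g x ≤ C * R ^ (α - d / r) := by
  have hconj : r.HolderConjugate r.conjExponent := .conjExponent hr
  set s := r.conjExponent
  have hds : d / s = d - d / r := by
    rw [div_eq_mul_inv, ← hconj.one_sub_inv]; ring
  have hfar : d < (d - α) * s := by
    rw [← div_lt_iff₀ hconj.symm.pos, hds]; linarith
  obtain ⟨C, hC⟩ := exists_sum_rpow_neg_le_of_ge (X := X) A
    (mul_nonneg (sub_nonneg.2 hαd) hconj.symm.nonneg) hfar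
  refine ⟨C ^ (1 / s), fun {ρ} hρ {L g R} hR hL hg => ?_⟩
  calc ∑ x ∈ L, ρ x ^ (-(d - α)) * g x
      ≤ (∑ x ∈ L, (ρ x ^ (-(d - α))) ^ s) ^ (1 / s) * (∑ x ∈ L, g x ^ r) ^ (1 / r) :=
        NNReal.inner_le_Lp_mul_Lq L _ _ hconj.symm
    _ ≤ (C * R ^ (d - (d - α) * s)) ^ (1 / s) * 1 := by
        have := hconj.symm.pos
        gcongr
        · simp only [← NNReal.rpow_mul, neg_mul]
          exact hC hρ hR hL
        · exact NNReal.rpow_le_one hg hconj.one_div_nonneg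
    _ = C ^ (1 / s) * R ^ (α - d / r) := by
        have hexp : (d - (d - α) * s) * (1 / s) = α - d / r := by
          rw [mul_one_div, sub_div, mul_div_cancel_right₀ _ hconj.symm.ne_zero, hds]; ring
        rw [mul_one, NNReal.mul_rpow, ← NNReal.rpow_mul, hexp]

/-- Split at `ρ = M ^ (-1 / d)`, where the near and far estimates balance. -/
lemma PolynomialGrowth.exists_sum_rpow_neg_mul_le (A : ℝ≥0) (hα : 0 < α) (hαd : α < d)
    (hr : 1 < r) (hαr : α < d / r) :
    ∃ C : ℝ≥0, ∀ {ρ : X → ℝ≥0}, PolynomialGrowth ρ A d →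
      ∀ {L : Finset X} {g : X → ℝ≥0} {M : ℝ≥0}, 0 < M → (∀ x ∈ L, g x ^ r ≤ M) →
      ∑ x ∈ L, g x ^ r ≤ 1 → ∑ x ∈ L, ρ x ^ (-(d - α)) * g x ≤ C * M ^ (1 / r - α / d) := by
  obtain ⟨C₁, hC₁⟩ := exists_sum_rpow_neg_mul_le_of_le (X := X) A hα hαd.le
  obtain ⟨C₂, hC₂⟩ := exists_sum_rpow_neg_mul_le_of_ge (X := X) A hr hαd.le hαr
  refine ⟨C₁ + C₂, fun {ρ} hρ {L g M} hM hgM hg => ?_⟩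
  have hd : d ≠ 0 := (hα.trans hαd).ne'
  have hr0 : 0 < r := zero_lt_one.trans hr
  set R := M ^ (-(1 / d))
  have hR : 0 < R := NNReal.rpow_pos hM
  have hnear_exp : R ^ α * M ^ (1 / r) = M ^ (1 / r - α / d) := by
    rw [← NNReal.rpow_mul, ← NNReal.rpow_add hM.ne']; congr 1; ring
  have hfar_exp : R ^ (α - d / r) = M ^ (1 / r - α / d) := by
    rw [← NNReal.rpow_mul]; congr 1; field_simp; ring
  rw [← Finset.sum_filter_add_sum_filter_not L (fun x => ρ x ≤ R), add_mul]
  gcongr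
  · rw [← hnear_exp]
    refine hC₁ hρ hR (fun x hx => (Finset.mem_filter.1 hx).2) fun x hx => ?_
    rw [one_div, NNReal.le_rpow_inv_iff hr0]
    exact hgM x (Finset.mem_filter.1 hx).1
  · rw [← hfar_exp]
    refine hC₂ hρ hR (fun x hx => (not_le.1 (Finset.mem_filter.1 hx).2).le) ?_
    exact (Finset.sum_le_sum_of_subset (Finset.filter_subset _ _)).trans hg

lemma exists_sum_sum_filter_rpow_neg_mul_le {A : ℝ≥0} {ρ : X → Y → ℝ≥0}
    (hρ : ∀ i, PolynomialGrowth (ρ i) A d) (hα : 0 < α) (hαd : α < d) (hp : 0 < p) (hr : 1 < r)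
    (hαr : α < d / r) (hpr : 1 / p + 1 / r = 1 + α / d) :
    ∃ C : ℝ≥0, ∀ (I : Finset X) (J : Finset Y) (f : X → ℝ≥0) (g : Y → ℝ≥0),
      ∑ i ∈ I, f i ^ p ≤ 1 → ∑ j ∈ J, g j ^ r ≤ 1 →
      ∑ i ∈ I, ∑ j ∈ J with g j ^ r ≤ f i ^ p, ρ i j ^ (-(d - α)) * (f i * g j) ≤ C := by
  obtain ⟨C, hC⟩ := PolynomialGrowth.exists_sum_rpow_neg_mul_le (X := Y) A hα hαd hr hαr
  refine ⟨C, fun I J f g hf hg => ?_⟩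
  have hrow : ∀ i, ∑ j ∈ J with g j ^ r ≤ f i ^ p, ρ i j ^ (-(d - α)) * (f i * g j) ≤
      C * f i ^ p := fun i => by
    rcases eq_zero_or_pos (f i) with hfi | hfi
    · simp [hfi]
    have hexp : f i * (f i ^ p) ^ (1 / r - α / d) = f i ^ p := by
      have : p * (1 / r - α / d) = p - 1 := by
        rw [show 1 / r - α / d = 1 - 1 / p by linarith]; field_simp
      rw [← NNReal.rpow_mul, this, NNReal.rpow_sub_one hfi.ne', mul_div_cancel₀ _ hfi.ne']
    calc ∑ j ∈ J with g j ^ r ≤ f i ^ p, ρ i j ^ (-(d - α)) * (f i * g j)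
        = f i * ∑ j ∈ J with g j ^ r ≤ f i ^ p, ρ i j ^ (-(d - α)) * g j := by
          simp only [Finset.mul_sum, mul_left_comm]
      _ ≤ f i * (C * (f i ^ p) ^ (1 / r - α / d)) := by
          gcongr
          exact hC (hρ i) (NNReal.rpow_pos hfi) (fun j hj => (Finset.mem_filter.1 hj).2)
            ((Finset.sum_le_sum_of_subset (Finset.filter_subset _ _)).trans hg)
      _ = C * f i ^ p := by rw [mul_left_comm, hexp]
  calc ∑ i ∈ I, ∑ j ∈ J with g j ^ r ≤ f i ^ p, ρ i j ^ (-(d - α)) * (f i * g j)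
      ≤ ∑ i ∈ I, C * f i ^ p := Finset.sum_le_sum fun i _ => hrow i
    _ = C * ∑ i ∈ I, f i ^ p := (Finset.mul_sum ..).symm
    _ ≤ C := mul_le_of_le_one_right zero_le hf

/-- The **Hardy–Littlewood–Sobolev inequality** in bilinear form: split the double sum
according to which of `f i ^ p` and `g j ^ r` is larger. -/
theorem BilinearBounded.rpow_neg_of_polynomialGrowth {A : ℝ≥0} {ρ : X → Y → ℝ≥0}
    (hrow : ∀ i, PolynomialGrowth (ρ i) A d) (hcol : ∀ j, PolynomialGrowth (fun i => ρ i j) A d)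
    (hα : 0 < α) (hαd : α < d) (hp : 1 < p) (hr : 1 < r) (hpr : 1 / p + 1 / r = 1 + α / d) :
    BilinearBounded (fun i j => ρ i j ^ (-(d - α))) p r := by
  have hd : 0 < d := hα.trans hαd
  have hp0 : 0 < p := zero_lt_one.trans hp
  have hr0 : 0 < r := zero_lt_one.trans hr
  have hαr : α < d / r := by
    have : α / d < 1 / r := by linarith [(div_lt_one hp0).2 hp]
    rwa [div_lt_iff₀' hd, mul_one_div] at this
  have hαp : α < d / p := by
    have : α / d < 1 / p := by linarith [(div_lt_one hr0).2 hr]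
    rwa [div_lt_iff₀' hd, mul_one_div] at this
  obtain ⟨C₁, hC₁⟩ := exists_sum_sum_filter_rpow_neg_mul_le hrow hα hαd hp0 hr hαr hpr
  obtain ⟨C₂, hC₂⟩ :=
    exists_sum_sum_filter_rpow_neg_mul_le hcol hα hαd hr0 hp hαp (by rwa [add_comm])
  refine ⟨C₁ + C₂, fun I J f g hf hg => ?_⟩
  calc ∑ i ∈ I, ∑ j ∈ J, ρ i j ^ (-(d - α)) * (f i * g j)
      ≤ ∑ i ∈ I, ((∑ j ∈ J with g j ^ r ≤ f i ^ p, ρ i j ^ (-(d - α)) * (f i * g j)) +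
          ∑ j ∈ J with f i ^ p ≤ g j ^ r, ρ i j ^ (-(d - α)) * (f i * g j)) := by
        gcongr with i
        rw [← Finset.sum_filter_add_sum_filter_not J (fun j => g j ^ r ≤ f i ^ p)]
        gcongr
        exact fun h => (not_le.1 h).le
    _ = ∑ i ∈ I, ∑ j ∈ J with g j ^ r ≤ f i ^ p, ρ i j ^ (-(d - α)) * (f i * g j) +
        ∑ j ∈ J, ∑ i ∈ I with f i ^ p ≤ g j ^ r, ρ i j ^ (-(d - α)) * (g j * f i) := by
        simp only [Finset.sum_add_distrib, Finset.sum_filter, mul_comm (g _)]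
        rw [Finset.sum_comm (s := J)]
    _ ≤ C₁ + C₂ := add_le_add (hC₁ I J f g hf hg) (hC₂ J I g f hg hf)

end HardyLittlewoodSobolev

section CriticalKernel

variable {X Y : Type*} {d a p r t u v : ℝ}

lemma PolynomialGrowth.exists_sum_rpow_neg_mul_add_rpow_neg_le (A : ℝ≥0) (hu : 0 ≤ u)
    (hud : u < d) (hv : 0 ≤ v) (huv : d < u + v) :
    ∃ C : ℝ≥0, ∀ {ρ : X → ℝ≥0}, PolynomialGrowth ρ A d → ∀ {R : ℝ≥0}, 0 < R → ∀ L : Finset X,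
      ∑ x ∈ L, ρ x ^ (-u) * (ρ x + R) ^ (-v) ≤ C * R ^ (d - u - v) := by
  obtain ⟨C₁, hC₁⟩ := exists_sum_rpow_neg_le_of_le (X := X) A hu hud
  obtain ⟨C₂, hC₂⟩ := exists_sum_rpow_neg_le_of_ge (X := X) A (add_nonneg hu hv) huv
  refine ⟨C₁ + C₂, fun {ρ} hρ {R} hR L => ?_⟩
  have hnear : ∀ x, (ρ x + R) ^ (-v) ≤ R ^ (-v) := fun x =>
    NNReal.rpow_le_rpow_of_nonpos hR le_add_self (neg_nonpos.2 hv)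
  have hfar : ∀ x, ρ x ^ (-u) * (ρ x + R) ^ (-v) ≤ ρ x ^ (-(u + v)) := fun x => by
    rw [neg_add, NNReal.rpow_add (hρ.pos x).ne']
    exact mul_le_mul_right (NNReal.rpow_le_rpow_of_nonpos (hρ.pos x) le_self_add
      (neg_nonpos.2 hv)) _
  rw [← Finset.sum_filter_add_sum_filter_not L (fun x => ρ x ≤ R), add_mul]
  gcongr
  · calc ∑ x ∈ L with ρ x ≤ R, ρ x ^ (-u) * (ρ x + R) ^ (-v)
        ≤ ∑ x ∈ L with ρ x ≤ R, ρ x ^ (-u) * R ^ (-v) :=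
        Finset.sum_le_sum fun x _ => mul_le_mul_right (hnear x) _
      _ ≤ C₁ * R ^ (d - u) * R ^ (-v) := by
        rw [← Finset.sum_mul]
        gcongr
        exact hC₁ hρ hR fun x hx => (Finset.mem_filter.1 hx).2
      _ = C₁ * R ^ (d - u - v) := by rw [mul_assoc, ← NNReal.rpow_add hR.ne', sub_eq_add_neg _ v]
  · calc ∑ x ∈ L with ¬ρ x ≤ R, ρ x ^ (-u) * (ρ x + R) ^ (-v)
        ≤ ∑ x ∈ L with ¬ρ x ≤ R, ρ x ^ (-(u + v)) := by gcongr; exact hfar _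
      _ ≤ C₂ * R ^ (d - u - v) := by
        rw [sub_sub]
        exact hC₂ hρ hR fun x hx => (not_le.1 (Finset.mem_filter.1 hx).2).le

/-- At each point, the smaller of `ρ` and `σ` may replace the other. -/
lemma PolynomialGrowth.exists_sum_rpow_neg_mul_add_rpow_neg_mul_rpow_neg_le (A : ℝ≥0)
    (ha : 0 ≤ a) (ht : 0 < t) (hat : a + t < d) :
    ∃ C : ℝ≥0, ∀ {ρ σ : X → ℝ≥0}, PolynomialGrowth ρ A d → PolynomialGrowth σ A d →
      ∀ {R : ℝ≥0}, 0 < R → ∀ L : Finset X,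
      ∑ x ∈ L, ρ x ^ (-a) * (σ x + R) ^ (-(d - a)) * σ x ^ (-t) ≤ C * R ^ (-t) := by
  have hda : 0 ≤ d - a := by linarith
  obtain ⟨C, hC⟩ := exists_sum_rpow_neg_mul_add_rpow_neg_le (X := X) A (add_nonneg ha ht.le) hat
    hda (by linarith)
  refine ⟨C + C, fun {ρ σ} hρ hσ {R} hR L => ?_⟩
  have hexp : d - (a + t) - (d - a) = -t := by ring
  have hpoint : ∀ x, ρ x ^ (-a) * (σ x + R) ^ (-(d - a)) * σ x ^ (-t) ≤
      ρ x ^ (-(a + t)) * (ρ x + R) ^ (-(d - a)) + σ x ^ (-(a + t)) * (σ x + R) ^ (-(d - a)) := by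
    intro x
    rw [mul_right_comm, neg_add, NNReal.rpow_add (hρ.pos x).ne', NNReal.rpow_add (hσ.pos x).ne']
    rcases le_total (ρ x) (σ x) with h | h
    · refine le_add_of_le_left ?_
      refine mul_le_mul' (mul_le_mul_right ?_ _) ?_
      · exact NNReal.rpow_le_rpow_of_nonpos (hρ.pos x) h (neg_nonpos.2 ht.le)
      · exact NNReal.rpow_le_rpow_of_nonpos (by positivity) (by gcongr) (neg_nonpos.2 hda)
    · refine le_add_of_le_right ?_
      refine mul_le_mul_left (mul_le_mul_left ?_ _) _
      exact NNReal.rpow_le_rpow_of_nonpos (hσ.pos x) h (neg_nonpos.2 ha)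
  calc ∑ x ∈ L, ρ x ^ (-a) * (σ x + R) ^ (-(d - a)) * σ x ^ (-t)
      ≤ ∑ x ∈ L, ρ x ^ (-(a + t)) * (ρ x + R) ^ (-(d - a)) +
        ∑ x ∈ L, σ x ^ (-(a + t)) * (σ x + R) ^ (-(d - a)) := by
        rw [← Finset.sum_add_distrib]
        exact Finset.sum_le_sum fun x _ => hpoint x
    _ ≤ (C + C) * R ^ (-t) := by
        rw [add_mul, ← hexp]
        exact add_le_add (hC hρ hR L) (hC hσ hR L)

/-- Schur's test with the weights `σ ^ (-s)` and `τ ^ (-s)` for a small `s > 0`. -/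
theorem BilinearBounded.rpow_neg_mul_add_rpow_neg {A : ℝ≥0} {ρ : X → Y → ℝ≥0} {σ : X → ℝ≥0}
    {τ : Y → ℝ≥0} (hrow : ∀ i, PolynomialGrowth (ρ i) A d)
    (hcol : ∀ j, PolynomialGrowth (fun i => ρ i j) A d) (hσ : PolynomialGrowth σ A d)
    (hτ : PolynomialGrowth τ A d) (ha : 0 ≤ a) (had : a < d) (hpr : p.HolderConjugate r) :
    BilinearBounded (fun i j => ρ i j ^ (-a) * (σ i + τ j) ^ (-(d - a))) p r := by
  have hp := hpr.pos
  have hr := hpr.symm.pos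
  set s := (d - a) / (p + r)
  have hs : 0 < s := div_pos (sub_pos.2 had) (add_pos hp hr)
  have hsum : s * p + s * r = d - a := by rw [← mul_add, div_mul_cancel₀ _ (add_pos hp hr).ne']
  have hsp : 0 < s * p := mul_pos hs hp
  have hsr : 0 < s * r := mul_pos hs hr
  obtain ⟨C₁, hC₁⟩ :=
    PolynomialGrowth.exists_sum_rpow_neg_mul_add_rpow_neg_mul_rpow_neg_le (X := Y) (d := d) A ha
      hsp (by linarith)
  obtain ⟨C₂, hC₂⟩ :=
    PolynomialGrowth.exists_sum_rpow_neg_mul_add_rpow_neg_mul_rpow_neg_le (X := X) (d := d) A ha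
      hsr (by linarith)
  refine of_schur (u := fun i => σ i ^ (-s)) (v := fun j => τ j ^ (-s)) (C₁ := C₁) (C₂ := C₂) hpr
    (fun i => (NNReal.rpow_pos (hσ.pos i)).ne') (fun j => (NNReal.rpow_pos (hτ.pos j)).ne')
    (fun i J => ?_) fun j I => ?_
  · simp only [← NNReal.rpow_mul, neg_mul, add_comm (σ i)]
    exact hC₁ (hrow i) hτ (hσ.pos i) J
  · simp only [← NNReal.rpow_mul, neg_mul]
    exact hC₂ (hcol j) hσ (hτ.pos j) I

end CriticalKernel

section IntegerLattice

open Matrix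

variable {ι : Type*} [Fintype ι]

lemma polynomialGrowth_one_add_nnnorm :
    PolynomialGrowth (fun v : ι → ℤ => 1 + ‖v‖₊) (2 ^ Fintype.card ι) (Fintype.card ι) where
  pos _ := by positivity
  card_le L R hL := by
    rcases L.eq_empty_or_nonempty with rfl | ⟨v₀, hv₀⟩
    · simp
    have hR : 1 ≤ R := le_self_add.trans (hL v₀ hv₀)
    set N := ⌊R - 1⌋₊
    have hN : (2 * N + 1 : ℝ≥0) ≤ 2 * R := by
      have hfloor : N ≤ R - 1 := Nat.floor_le zero_le
      have hcancel : R - 1 + 1 = R := tsub_add_cancel_of_le hR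
      linarith
    have hsub : L ⊆ Fintype.piFinset fun _ : ι => Finset.Icc (-(N : ℤ)) N := fun v hv =>
      Fintype.mem_piFinset.2 fun t => Finset.mem_Icc.2 <| abs_le.1 <|
        (Int.abs_le_floor_nnreal_iff (v t) (R - 1)).2 <|
          (nnnorm_le_pi_nnnorm v t).trans (le_tsub_of_add_le_left (hL v hv))
    have hcard : L.card ≤ (2 * N + 1) ^ Fintype.card ι := by
      refine (Finset.card_le_card hsub).trans_eq ?_
      rw [Fintype.card_piFinset, Finset.prod_const, Finset.card_univ, Int.card_Icc,
        show ((N : ℤ) + 1 - -(N : ℤ)).toNat = 2 * N + 1 by omega]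
    calc (L.card : ℝ≥0) ≤ (2 * N + 1) ^ Fintype.card ι := by exact_mod_cast hcard
      _ ≤ (2 * R) ^ Fintype.card ι := by gcongr
      _ = 2 ^ Fintype.card ι * R ^ (Fintype.card ι : ℝ) := by rw [mul_pow, NNReal.rpow_natCast]

lemma polynomialGrowth_one_add_nnnorm_sub (w : ι → ℤ) :
    PolynomialGrowth (fun i => 1 + ‖i - w‖₊) (2 ^ Fintype.card ι) (Fintype.card ι) :=
  polynomialGrowth_one_add_nnnorm.comp_injective (φ := fun i => i - w) sub_left_injective

lemma exists_nnnorm_mulVec_le (M : Matrix ι ι ℤ) :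
    ∃ D : ℝ≥0, ∀ j : ι → ℤ, ‖M *ᵥ j‖₊ ≤ D * ‖j‖₊ := by
  let := Matrix.linftyOpNormedRing (n := ι) (α := ℤ)
  exact ⟨‖M‖₊, linfty_opNNNorm_mulVec M⟩

variable [DecidableEq ι] {M N : Matrix ι ι ℤ}

lemma polynomialGrowth_one_add_nnnorm_sub_mulVec (hM : M.det ≠ 0) (i : ι → ℤ) :
    PolynomialGrowth (fun j => 1 + ‖i - M *ᵥ j‖₊) (2 ^ Fintype.card ι) (Fintype.card ι) :=
  polynomialGrowth_one_add_nnnorm.comp_injective (φ := fun j => i - M *ᵥ j) <|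
    sub_right_injective.comp fun j₁ j₂ hj => sub_eq_zero.1 <|
      eq_zero_of_mulVec_eq_zero hM (by rw [mulVec_sub]; exact sub_eq_zero.2 hj)

/-- Apply the adjugate, using that a nonzero integer determinant has norm at least one. -/
lemma exists_nnnorm_le_mul_nnnorm_mulVec (hM : M.det ≠ 0) :
    ∃ D : ℝ≥0, ∀ j : ι → ℤ, ‖j‖₊ ≤ D * ‖M *ᵥ j‖₊ := by
  obtain ⟨D, hD⟩ := exists_nnnorm_mulVec_le M.adjugate
  refine ⟨D, fun j => ?_⟩
  have hdet : 1 ≤ ‖M.det‖₊ := by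
    rw [← NNReal.natCast_natAbs]
    exact_mod_cast Int.natAbs_pos.2 hM
  calc ‖j‖₊ ≤ ‖M.det‖₊ * ‖j‖₊ := le_mul_of_one_le_left zero_le hdet
    _ = ‖M.adjugate *ᵥ (M *ᵥ j)‖₊ := by
      rw [mulVec_mulVec, adjugate_mul, smul_mulVec, one_mulVec, nnnorm_smul]
    _ ≤ D * ‖M *ᵥ j‖₊ := hD _

lemma exists_add_le_mul_one_add_nnnorm_sub_mulVec (h : (N - M).det ≠ 0) :
    ∃ E : ℝ≥0, ∀ i j : ι → ℤ, ‖i - M *ᵥ j‖₊ ≤ ‖i - N *ᵥ j‖₊ →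
      (1 + ‖i‖₊) + (1 + ‖M *ᵥ j‖₊) ≤ E * (1 + ‖i - N *ᵥ j‖₊) := by
  obtain ⟨D, hD⟩ := exists_nnnorm_le_mul_nnnorm_mulVec h
  obtain ⟨D', hD'⟩ := exists_nnnorm_mulVec_le M
  refine ⟨2 + 4 * (D' * D), fun i j hij => ?_⟩
  set x := ‖i - N *ᵥ j‖₊
  have hdiff : ‖(N - M) *ᵥ j‖₊ ≤ 2 * x := by
    calc ‖(N - M) *ᵥ j‖₊ = ‖(i - M *ᵥ j) - (i - N *ᵥ j)‖₊ := by
          rw [sub_mulVec, sub_sub_sub_cancel_left]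
      _ ≤ ‖i - M *ᵥ j‖₊ + x := nnnorm_sub_le _ _
      _ ≤ 2 * x := by rw [two_mul]; gcongr
  have hM : ‖M *ᵥ j‖₊ ≤ 2 * (D' * D) * x := by
    calc ‖M *ᵥ j‖₊ ≤ D' * (D * (2 * x)) := (hD' j).trans (by gcongr; exact (hD j).trans (by gcongr))
      _ = 2 * (D' * D) * x := by ring
  have hi : ‖i‖₊ ≤ x + ‖M *ᵥ j‖₊ := by
    calc ‖i‖₊ = ‖(i - M *ᵥ j) + M *ᵥ j‖₊ := by rw [sub_add_cancel]
      _ ≤ ‖i - M *ᵥ j‖₊ + ‖M *ᵥ j‖₊ := nnnorm_add_le _ _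
      _ ≤ x + ‖M *ᵥ j‖₊ := by gcongr
  calc (1 + ‖i‖₊) + (1 + ‖M *ᵥ j‖₊) ≤ 2 + x + 4 * (D' * D) * x := by linarith
    _ ≤ (2 + 4 * (D' * D)) * (1 + x) := by
      have : 0 ≤ x + 4 * (D' * D) := zero_le
      linarith [add_mul 2 (4 * (D' * D)) (1 + x)]

end IntegerLattice

section ProductKernel

open Matrix

lemma nnreal_rpow_sum_of_pos {κ : Type*} {x : ℝ≥0} (hx : 0 < x) (a : κ → ℝ) (s : Finset κ) :
    x ^ (∑ k ∈ s, a k) = ∏ k ∈ s, x ^ a k :=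
  NNReal.eq <| by push_cast; exact Real.rpow_sum_of_pos (NNReal.coe_pos.2 hx) a s

/-- The smallest factor is kept, and every other one is compared with the corresponding `W k`. -/
lemma prod_rpow_neg_le_sum {κ : Type*} [Fintype κ] [Nonempty κ] {a : κ → ℝ} {x W : κ → ℝ≥0}
    {E : ℝ≥0} (ha : ∀ k, 0 ≤ a k) (hE : 1 ≤ E) (hW : ∀ k, 0 < W k)
    (hWx : ∀ k l, k ≠ l → x k ≤ x l → W k ≤ E * x l) :
    ∏ k, x k ^ (-a k) ≤ E ^ (∑ k, a k) * ∑ k, x k ^ (-a k) * W k ^ (-(∑ l, a l - a k)) := by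
  obtain ⟨k, hk⟩ := Finite.exists_min x
  have hWE : 0 < W k / E := div_pos (hW k) (zero_lt_one.trans_le hE)
  have hrest : ∑ l, a l - a k = ∑ l ∈ Finset.univ.erase k, a l :=
    sub_eq_of_eq_add (Finset.sum_erase_add _ _ (Finset.mem_univ k)).symm
  have hfactor : ∀ l ∈ Finset.univ.erase k, x l ^ (-a l) ≤ (W k / E) ^ (-a l) := fun l hl =>
    NNReal.rpow_le_rpow_of_nonpos hWE
      (NNReal.div_le_of_le_mul' (hWx k l (Finset.ne_of_mem_erase hl).symm (hk l)))
      (neg_nonpos.2 (ha l))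
  calc ∏ l, x l ^ (-a l) = x k ^ (-a k) * ∏ l ∈ Finset.univ.erase k, x l ^ (-a l) :=
        (Finset.mul_prod_erase _ _ (Finset.mem_univ k)).symm
    _ ≤ x k ^ (-a k) * ∏ l ∈ Finset.univ.erase k, (W k / E) ^ (-a l) :=
        mul_le_mul_right (Finset.prod_le_prod' hfactor) _
    _ = E ^ (∑ l, a l - a k) * (x k ^ (-a k) * W k ^ (-(∑ l, a l - a k))) := by
        rw [← nnreal_rpow_sum_of_pos hWE, Finset.sum_neg_distrib, ← hrest, NNReal.div_rpow,
          NNReal.rpow_neg E, div_inv_eq_mul]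
        ring
    _ ≤ E ^ (∑ l, a l) * ∑ k, x k ^ (-a k) * W k ^ (-(∑ l, a l - a k)) := by
        refine mul_le_mul' (NNReal.rpow_le_rpow_of_exponent_le hE (sub_le_self _ (ha k))) ?_
        exact Finset.single_le_sum (f := fun k => x k ^ (-a k) * W k ^ (-(∑ l, a l - a k)))
          (fun _ _ => zero_le) (Finset.mem_univ k)

variable {n m : ℕ} {α p r : ℝ} {al : Fin m → ℝ} {A : Fin m → Matrix (Fin n) (Fin n) ℤ}

/-- The kernel of the operator `Tfs al A`, set to zero where one of the factors is singular. -/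
noncomputable def tfsKernel (al : Fin m → ℝ) (A : Fin m → Matrix (Fin n) (Fin n) ℤ)
    (i j : Fin n → ℤ) : ℝ≥0 :=
  if ∀ k, i ≠ A k *ᵥ j then ∏ k, (eucZ (i - A k *ᵥ j)).toNNReal ^ (-al k) else 0

lemma eucZ_nonneg (v : Fin n → ℤ) : 0 ≤ eucZ v := Real.sqrt_nonneg _

lemma Tfs_eq_tsum_tfsKernel (b : (Fin n → ℤ) → ℝ) (j : Fin n → ℤ) :
    Tfs al A b j = ∑' i, (↑(tfsKernel al A i j * ‖b i‖₊) : ℝ≥0∞) := by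
  refine tsum_congr fun i => ?_
  rw [tfsKernel]
  split_ifs
  · rw [← ENNReal.ofReal_coe_nnreal, div_eq_inv_mul]
    push_cast
    simp only [Real.coe_toNNReal _ (eucZ_nonneg _), Real.rpow_neg (eucZ_nonneg _),
      Finset.prod_inv_distrib, Real.norm_eq_abs]
  · rw [zero_mul, ENNReal.coe_zero]

lemma one_add_nnnorm_le_two_mul_toNNReal_eucZ {v : Fin n → ℤ} (hv : v ≠ 0) :
    1 + ‖v‖₊ ≤ 2 * (eucZ v).toNNReal := by
  have heuc : ‖v‖₊ ≤ (eucZ v).toNNReal := by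
    refine pi_nnnorm_le_iff.2 fun t => NNReal.le_toNNReal_of_coe_le ?_
    rw [coe_nnnorm, Int.norm_eq_abs]
    exact Real.abs_le_sqrt (Finset.single_le_sum (f := fun k => (v k : ℝ) ^ 2)
      (fun _ _ => sq_nonneg _) (Finset.mem_univ t))
  have hone : 1 ≤ ‖v‖₊ := by
    obtain ⟨t, ht⟩ := Function.ne_iff.1 hv
    refine le_trans ?_ (nnnorm_le_pi_nnnorm v t)
    rw [← NNReal.natCast_natAbs]
    exact_mod_cast Int.natAbs_pos.2 ht
  rw [two_mul]
  exact add_le_add (hone.trans heuc) heuc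

lemma tfsKernel_le_prod (hal : ∀ k, 0 ≤ al k) (i j : Fin n → ℤ) :
    tfsKernel al A i j ≤ 2 ^ (∑ k, al k) * ∏ k, (1 + ‖i - A k *ᵥ j‖₊) ^ (-al k) := by
  rw [tfsKernel]
  split_ifs with hij
  · rw [nnreal_rpow_sum_of_pos two_pos, ← Finset.prod_mul_distrib]
    refine Finset.prod_le_prod' fun k _ => ?_
    calc (eucZ (i - A k *ᵥ j)).toNNReal ^ (-al k)
        ≤ ((1 + ‖i - A k *ᵥ j‖₊) / 2) ^ (-al k) :=
          NNReal.rpow_le_rpow_of_nonpos (by positivity)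
            (NNReal.div_le_of_le_mul' <|
              one_add_nnnorm_le_two_mul_toNNReal_eucZ (sub_ne_zero.2 (hij k)))
            (neg_nonpos.2 (hal k))
      _ = 2 ^ al k * (1 + ‖i - A k *ᵥ j‖₊) ^ (-al k) := by
          rw [NNReal.div_rpow, NNReal.rpow_neg 2, div_inv_eq_mul, mul_comm]
  · exact zero_le

lemma BilinearBounded.tfsKernel_of_forall [Nonempty (Fin m)] {E : ℝ≥0}
    {W : Fin m → (Fin n → ℤ) → (Fin n → ℤ) → ℝ≥0} (hal : ∀ k, 0 ≤ al k) (hE : 1 ≤ E)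
    (hW : ∀ k i j, 0 < W k i j)
    (hWA : ∀ k l i j, k ≠ l → ‖i - A k *ᵥ j‖₊ ≤ ‖i - A l *ᵥ j‖₊ →
      W k i j ≤ E * (1 + ‖i - A l *ᵥ j‖₊))
    (h : ∀ k, BilinearBounded
      (fun i j => (1 + ‖i - A k *ᵥ j‖₊) ^ (-al k) * W k i j ^ (-(∑ l, al l - al k))) p r) :
    BilinearBounded (tfsKernel al A) p r := by
  refine (BilinearBounded.sum (s := .univ) h).of_le_mul
    (D := 2 ^ (∑ k, al k) * E ^ (∑ k, al k)) fun i j => ?_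
  rw [mul_assoc]
  refine (tfsKernel_le_prod hal i j).trans (mul_le_mul_right ?_ _)
  exact prod_rpow_neg_le_sum hal hE (fun k => hW k i j) fun k l hkl hle =>
    hWA k l i j hkl (le_of_add_le_add_left hle)

theorem BilinearBounded.tfsKernel_of_pos (hα : 0 < α) (hαn : α < n) (hal : ∀ k, 0 ≤ al k)
    (hsum : ∑ k, al k = n - α) (hA : ∀ k, (A k).det ≠ 0) (hp : 1 < p) (hr : 1 < r)
    (hpr : 1 / p + 1 / r = 1 + α / n) : BilinearBounded (tfsKernel al A) p r := by
  have : Nonempty (Fin m) := not_isEmpty_iff.1 fun _ => by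
    rw [Finset.univ_eq_empty, Finset.sum_empty] at hsum
    linarith
  refine tfsKernel_of_forall (W := fun k i j => 1 + ‖i - A k *ᵥ j‖₊) hal le_rfl
    (fun _ _ _ => by positivity) (fun k l i j _ hle => by rw [one_mul]; gcongr) fun k => ?_
  have hmerge : ∀ i j, (1 + ‖i - A k *ᵥ j‖₊) ^ (-al k) *
      (1 + ‖i - A k *ᵥ j‖₊) ^ (-(∑ l, al l - al k)) = (1 + ‖i - A k *ᵥ j‖₊) ^ (-(n - α)) :=
    fun i j => by
      rw [← NNReal.rpow_add (by positivity), hsum]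
      congr 1
      ring
  simp only [hmerge]
  refine rpow_neg_of_polynomialGrowth (A := 2 ^ n) (fun i => ?_) (fun j => ?_) hα hαn hp hr hpr
  · simpa using polynomialGrowth_one_add_nnnorm_sub_mulVec (hA k) i
  · simpa using polynomialGrowth_one_add_nnnorm_sub (A k *ᵥ j)

lemma exists_forall_add_le_mul_one_add_nnnorm_sub_mulVec
    (hA : ∀ k l, k ≠ l → (A k - A l).det ≠ 0) :
    ∃ E : ℝ≥0, ∀ k l i j, k ≠ l → ‖i - A k *ᵥ j‖₊ ≤ ‖i - A l *ᵥ j‖₊ →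
      (1 + ‖i‖₊) + (1 + ‖A k *ᵥ j‖₊) ≤ E * (1 + ‖i - A l *ᵥ j‖₊) := by
  choose! E hE using fun k l (hkl : k ≠ l) =>
    exists_add_le_mul_one_add_nnnorm_sub_mulVec (hA l k hkl.symm)
  obtain ⟨E₀, hE₀⟩ := Finite.exists_le fun kl : Fin m × Fin m => E kl.1 kl.2
  exact ⟨E₀, fun k l i j hkl hle =>
    (hE k l hkl i j hle).trans (mul_le_mul_left (hE₀ (k, l)) _)⟩

theorem BilinearBounded.tfsKernel_of_sum_eq (hm : 1 < m) (hal : ∀ k, 0 < al k)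
    (hsum : ∑ k, al k = n) (hA : ∀ k, (A k).det ≠ 0)
    (hAA : ∀ k l, k ≠ l → (A k - A l).det ≠ 0) (hpr : p.HolderConjugate r) :
    BilinearBounded (tfsKernel al A) p r := by
  have : Nontrivial (Fin m) := Fin.nontrivial_iff_two_le.2 hm
  obtain ⟨E, hE⟩ := exists_forall_add_le_mul_one_add_nnnorm_sub_mulVec hAA
  refine tfsKernel_of_forall (E := max 1 E)
    (W := fun k i j => (1 + ‖i‖₊) + (1 + ‖A k *ᵥ j‖₊)) (fun k => (hal k).le) (le_max_left _ _)
    (fun _ _ _ => by positivity)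
    (fun k l i j hkl hle => (hE k l i j hkl hle).trans (mul_le_mul_left (le_max_right _ _) _))
    fun k => ?_
  have halk : al k < n := by
    obtain ⟨l, hl⟩ := exists_ne k
    rw [← hsum]
    exact Finset.single_lt_sum hl (Finset.mem_univ k) (Finset.mem_univ l) (hal l)
      fun t _ _ => (hal t).le
  rw [hsum]
  refine rpow_neg_mul_add_rpow_neg (A := 2 ^ n) (fun i => ?_) (fun j => ?_) ?_ ?_ (hal k).le halk
    hpr
  · simpa using polynomialGrowth_one_add_nnnorm_sub_mulVec (hA k) i
  · simpa using polynomialGrowth_one_add_nnnorm_sub (A k *ᵥ j)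
  · simpa using polynomialGrowth_one_add_nnnorm (ι := Fin n)
  · simpa using polynomialGrowth_one_add_nnnorm_sub_mulVec (hA k) 0

end ProductKernel

theorem stmt2 (n : ℕ) (hn : 1 ≤ n) (α : ℝ) (hα0 : 0 ≤ α) (hαn : α < n)
    (m : ℕ) (hm : 1 - α / n < m)
    (al : Fin m → ℝ) (hal : ∀ k, 0 < al k) (hsum : ∑ k, al k = n - α)
    (A : Fin m → Matrix (Fin n) (Fin n) ℤ) (hA : ∀ k, (A k).det ≠ 0)
    (hA0 : α = 0 → ∀ k l, k ≠ l → (A k - A l).det ≠ 0)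
    (p q : ℝ) (hp : 1 < p) (hpn : α * p < n) (hq : 1 / q = 1 / p - α / n) :
    ∃ C : ℝ, 0 < C ∧ ∀ b : (Fin n → ℤ) → ℝ,
      (∑' j : Fin n → ℤ, (Tfs al A b j) ^ q) ^ (1 / q) ≤ ENNReal.ofReal C * lpNorm p b := by
  have hn0 : (0 : ℝ) < n := hα0.trans_lt hαn
  have hp0 : 0 < p := zero_lt_one.trans hp
  have hq0 : 0 < q := by
    rw [← one_div_pos, hq, sub_pos, div_lt_div_iff₀ hn0 hp0, one_mul]
    exact hpn
  have hq1 : 1 < q := by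
    rw [← div_lt_one hq0, hq]
    linarith [(div_lt_one hp0).2 hp, div_nonneg hα0 hn0.le]
  have hqr : q.HolderConjugate q.conjExponent := .conjExponent hq1
  have hK : BilinearBounded (tfsKernel al A) p q.conjExponent := by
    rcases hα0.eq_or_lt with rfl | hα
    · obtain rfl : q = p := by simpa using hq
      exact .tfsKernel_of_sum_eq (by simpa using hm) hal (by simpa using hsum) hA (hA0 rfl) hqr
    · refine .tfsKernel_of_pos hα hαn (fun k => (hal k).le) hsum hA hp hqr.symm.lt ?_
      linarith [hqr.one_div_add_one_div]
  obtain ⟨C, hC⟩ := hK.exists_Lp_tsum_le hp0 hqr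
  refine ⟨C + 1, by positivity, fun b => ?_⟩
  simp only [Tfs_eq_tsum_tfsKernel]
  refine (hC fun i => ‖b i‖₊).trans ?_
  simp only [lpNorm, ← Real.enorm_eq_ofReal_abs]
  refine mul_le_mul_left ?_ _
  rw [← ENNReal.ofReal_coe_nnreal]
  exact ENNReal.ofReal_le_ofReal (by linarith)
end

section
/- Let 0 < α < n and m ∈ ℕ, m ≥ 1, and let T_{α,m} be the discrete fractional series operator. Then for every sequence b : ℤ^n → ℝ and every j ∈ ℤ^n, |(T_{α,m} b)(j)| ≤ Σ_{k=1}^m (I_α |b|)(A_k j), where |b| denotes the sequence {|b(i)|}_{i∈ℤ^n}. -/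
open scoped ENNReal BigOperators Classical

/-! At each `i` the smallest of the distances `|i - A_k j|`, attained at `k = k₀` say, controls the
whole kernel: the product of the `|i - A_k j| ^ α_k` is at least `|i - A_{k₀} j| ^ (n - α)`, because
the exponents `α_k` sum to `n - α`. Since `k₀` depends on `i`, the term at `k₀` is bounded by the
sum over all `k` before summing over `i`. -/

theorem eucZ_pos {n : ℕ} {v : Fin n → ℤ} (hv : v ≠ 0) : 0 < eucZ v := by
  obtain ⟨t, ht⟩ := Function.ne_iff.mp hv
  have ht' : (v t : ℝ) ≠ 0 := Int.cast_ne_zero.mpr ht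
  exact Real.sqrt_pos.mpr <|
    Finset.sum_pos' (fun k _ => sq_nonneg _) ⟨t, Finset.mem_univ t, by positivity⟩

section WeightedProduct

variable {ι : Type*} {s : Finset ι} {r a : ι → ℝ}

theorem exists_rpow_sum_le_prod_rpow (hs : s.Nonempty) (hr : ∀ k ∈ s, 0 ≤ r k)
    (ha : ∀ k ∈ s, 0 ≤ a k) : ∃ k₀ ∈ s, r k₀ ^ ∑ k ∈ s, a k ≤ ∏ k ∈ s, r k ^ a k := by
  obtain ⟨k₀, hk₀, hmin⟩ := s.exists_min_image r hs
  refine ⟨k₀, hk₀, ?_⟩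
  rw [Real.rpow_sum_of_nonneg (hr k₀ hk₀) ha]
  exact Finset.prod_le_prod (fun k _ => Real.rpow_nonneg (hr k₀ hk₀) _)
    fun k hk => Real.rpow_le_rpow (hr k₀ hk₀) (hmin k hk) (ha k hk)

theorem div_prod_rpow_le_sum_div_rpow_sum {x : ℝ} (hx : 0 ≤ x) (hs : s.Nonempty)
    (hr : ∀ k ∈ s, 0 < r k) (ha : ∀ k ∈ s, 0 ≤ a k) :
    x / ∏ k ∈ s, r k ^ a k ≤ ∑ k ∈ s, x / r k ^ ∑ l ∈ s, a l := by
  obtain ⟨k₀, hk₀, hle⟩ := exists_rpow_sum_le_prod_rpow hs (fun k hk => (hr k hk).le) ha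
  calc x / ∏ k ∈ s, r k ^ a k
      ≤ x / r k₀ ^ ∑ l ∈ s, a l :=
        div_le_div_of_nonneg_left hx (Real.rpow_pos_of_pos (hr k₀ hk₀) _) hle
    _ ≤ ∑ k ∈ s, x / r k ^ ∑ l ∈ s, a l :=
        Finset.single_le_sum (f := fun k => x / r k ^ ∑ l ∈ s, a l)
          (fun k hk => div_nonneg hx (Real.rpow_nonneg (hr k hk).le _)) hk₀

end WeightedProduct

theorem stmt3_general {n m : ℕ} (hm : 1 ≤ m) {α : ℝ} {al : Fin m → ℝ} (hal : ∀ k, 0 ≤ al k)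
    (hsum : ∑ k, al k = n - α) (A : Fin m → Matrix (Fin n) (Fin n) ℤ) (b : (Fin n → ℤ) → ℝ)
    (j : Fin n → ℤ) : Tfs al A b j ≤ ∑ k : Fin m, Iop α b ((A k).mulVec j) := by
  have hne : (Finset.univ : Finset (Fin m)).Nonempty := ⟨⟨0, hm⟩, Finset.mem_univ _⟩
  unfold Tfs Iop
  rw [← Summable.tsum_finsetSum fun _ _ => ENNReal.summable]
  refine ENNReal.tsum_le_tsum fun i => ?_
  split_ifs with hi
  · have hpos : ∀ k, 0 < eucZ (i - (A k).mulVec j) := fun k => eucZ_pos (sub_ne_zero.mpr (hi k))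
    have hterm : ∀ k, 0 ≤ |b i| / eucZ (i - (A k).mulVec j) ^ ((n : ℝ) - α) := fun k =>
      div_nonneg (abs_nonneg _) (Real.rpow_nonneg (hpos k).le _)
    have hkernel := div_prod_rpow_le_sum_div_rpow_sum (abs_nonneg (b i)) hne
      (fun k _ => hpos k) fun k _ => hal k
    rw [hsum] at hkernel
    simp only [if_pos (hi _)]
    rw [← ENNReal.ofReal_sum_of_nonneg fun k _ => hterm k]
    exact ENNReal.ofReal_le_ofReal hkernel
  · exact zero_le

theorem stmt3 (n : ℕ) (hn : 1 ≤ n) (α : ℝ) (hα0 : 0 < α) (hαn : α < n)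
    (m : ℕ) (hm : 1 ≤ m)
    (al : Fin m → ℝ) (hal : ∀ k, 0 < al k) (hsum : ∑ k, al k = n - α)
    (A : Fin m → Matrix (Fin n) (Fin n) ℤ) (hA : ∀ k, (A k).det ≠ 0)
    (b : (Fin n → ℤ) → ℝ) (j : Fin n → ℤ) :
    Tfs al A b j ≤ ∑ k : Fin m, Iop α b ((A k).mulVec j) :=
  stmt3_general hm (fun k => (hal k).le) hsum A b j
end

section
/- Let α_1, α_2 > 0 with α_1 + α_2 = n, let A_1, A_2 be invertible n×n integer matrices with A_1 − A_2 invertible, set d = min{|A_1 x − A_2 x| : |x| = 1} and D = max{‖A_1‖, ‖A_2‖}. For every 1 ≤ p < ∞ there is a constant C > 0 such that for all b ∈ ℓ^p(ℤ^n) and all j_0 ∈ ℤ^n \ {0}, letting I_4 = {i ∈ ℤ^n : |i| ≥ 2√n D |j_0|} ∩ I_1^c ∩ I_2^c (where I_1 = {i : 0 < |i − A_1 j_0| ≤ (d/2)|j_0|} and I_2 = {i : 0 < |i − A_2 j_0| ≤ (d/2)|j_0|}), one has Σ_{i ∈ I_4} |b(i)| / (|i − A_1 j_0|^{α_1} |i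 − A_2 j_0|^{α_2}) ≤ C ‖b‖_{ℓ^p(ℤ^n)} |j_0|^{-n/p}. -/
open scoped ENNReal BigOperators Classical

/-!
Where `|i| ≥ 2 D |j|`, each factor `|i - A k j|` is comparable to `|i|`, so the kernel is at most a
constant times `|i| ^ (-s)` with `s = ∑ k, α k`. Hölder's inequality leaves the tail sums of
`|i| ^ (-s q)` over `|i| ≥ R`, with `q` conjugate to `p`. Summed over the dyadic shells
`2 ^ k R ≤ |i| < 2 ^ (k + 1) R` they become a geometric series, and the only fact about `ℤ ^ n`
that enters is that the ball of radius `r` contains at most `(3 r) ^ n` nonzero lattice points.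
-/

section Dyadic

open MeasureTheory

lemma preimage_Ici_subset_iUnion_preimage_Ico {X : Type*} (f : X → ℝ) {R : ℝ} (hR : 0 < R) :
    f ⁻¹' Set.Ici R ⊆ ⋃ k : ℕ, f ⁻¹' Set.Ico (2 ^ k * R) (2 * (2 ^ k * R)) := by
  intro x hx
  obtain ⟨k, hk, hk'⟩ := exists_nat_pow_near ((one_le_div hR).2 hx) one_lt_two
  rw [le_div_iff₀ hR] at hk
  rw [div_lt_iff₀ hR, pow_succ', mul_assoc] at hk'
  exact Set.mem_iUnion.2 ⟨k, hk, hk'⟩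

variable {X : Type*} [MeasurableSpace X] {μ : Measure X} {f : X → ℝ} {d s R : ℝ}

lemma setLIntegral_rpow_neg_preimage_Ico_le {A : ℝ≥0∞} (hs : 0 ≤ s) (hR : 0 < R)
    (hμ : μ (f ⁻¹' Set.Ioc 0 (2 * R)) ≤ A * ENNReal.ofReal ((2 * R) ^ d)) :
    ∫⁻ x in f ⁻¹' Set.Ico R (2 * R), ENNReal.ofReal (f x ^ (-s)) ∂μ
      ≤ A * ENNReal.ofReal (2 ^ d * R ^ (d - s)) := by
  have hsub : f ⁻¹' Set.Ico R (2 * R) ⊆ f ⁻¹' Set.Ioc 0 (2 * R) :=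
    Set.preimage_mono fun _ ht => ⟨hR.trans_le ht.1, ht.2.le⟩
  calc
    _ ≤ ∫⁻ _ in f ⁻¹' Set.Ico R (2 * R), ENNReal.ofReal (R ^ (-s)) ∂μ :=
      setLIntegral_mono measurable_const fun x hx => ENNReal.ofReal_le_ofReal <|
        Real.rpow_le_rpow_of_nonpos hR hx.1 (neg_nonpos.2 hs)
    _ = ENNReal.ofReal (R ^ (-s)) * μ (f ⁻¹' Set.Ico R (2 * R)) := setLIntegral_const _ _
    _ ≤ ENNReal.ofReal (R ^ (-s)) * (A * ENNReal.ofReal ((2 * R) ^ d)) := by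
      gcongr
      exact (measure_mono hsub).trans hμ
    _ = A * ENNReal.ofReal (2 ^ d * R ^ (d - s)) := by
      rw [mul_left_comm, ← ENNReal.ofReal_mul (by positivity), Real.mul_rpow two_pos.le hR.le,
        sub_eq_add_neg, Real.rpow_add hR]
      ring_nf

-- Growth is measured on `0 < f ≤ r`, not `f ≤ r`, so that lattices satisfy it for small `r` too.
lemma setLIntegral_rpow_neg_preimage_Ici_le {A : ℝ≥0∞} (hs : 0 ≤ s) (hds : d < s)
    (hμ : ∀ r, 0 < r → μ (f ⁻¹' Set.Ioc 0 r) ≤ A * ENNReal.ofReal (r ^ d)) (hR : 0 < R) :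
    ∫⁻ x in f ⁻¹' Set.Ici R, ENNReal.ofReal (f x ^ (-s)) ∂μ
      ≤ A * ENNReal.ofReal (2 ^ d * (1 - 2 ^ (d - s))⁻¹ * R ^ (d - s)) := by
  have hratio : (2 : ℝ) ^ (d - s) < 1 :=
    Real.rpow_lt_one_of_one_lt_of_neg one_lt_two (sub_neg.2 hds)
  have hshell (k : ℕ) : 2 ^ d * (2 ^ k * R) ^ (d - s)
      = 2 ^ d * R ^ (d - s) * ((2 : ℝ) ^ (d - s)) ^ k := by
    rw [Real.mul_rpow (by positivity) hR.le, Real.rpow_pow_comm two_pos.le]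
    ring
  calc
    _ ≤ ∫⁻ x in ⋃ k : ℕ, f ⁻¹' Set.Ico (2 ^ k * R) (2 * (2 ^ k * R)),
          ENNReal.ofReal (f x ^ (-s)) ∂μ :=
      lintegral_mono_set (preimage_Ici_subset_iUnion_preimage_Ico f hR)
    _ ≤ ∑' k : ℕ, ∫⁻ x in f ⁻¹' Set.Ico (2 ^ k * R) (2 * (2 ^ k * R)),
          ENNReal.ofReal (f x ^ (-s)) ∂μ := lintegral_iUnion_le _ _
    _ ≤ ∑' k : ℕ, A * ENNReal.ofReal (2 ^ d * (2 ^ k * R) ^ (d - s)) :=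
      ENNReal.tsum_le_tsum fun k =>
        setLIntegral_rpow_neg_preimage_Ico_le hs (by positivity) (hμ _ (by positivity))
    _ = A * ENNReal.ofReal (2 ^ d * (1 - 2 ^ (d - s))⁻¹ * R ^ (d - s)) := by
      simp only [hshell]
      rw [ENNReal.tsum_mul_left, ← ENNReal.ofReal_tsum_of_nonneg (fun k => by positivity)
        ((summable_geometric_of_lt_one (by positivity) hratio).mul_left _), tsum_mul_left,
        tsum_geometric_of_lt_one (by positivity) hratio, mul_right_comm]

lemma setLIntegral_mul_rpow_neg_preimage_Ici_le (hf : Measurable f) (g : X → ℝ≥0∞)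
    (hs : 0 ≤ s) (hR : 0 < R) :
    ∫⁻ x in f ⁻¹' Set.Ici R, g x * ENNReal.ofReal (f x ^ (-s)) ∂μ
      ≤ (∫⁻ x, g x ∂μ) * ENNReal.ofReal (R ^ (-s)) := by
  calc
    _ ≤ ∫⁻ x in f ⁻¹' Set.Ici R, g x * ENNReal.ofReal (R ^ (-s)) ∂μ := by
      refine setLIntegral_mono' (hf measurableSet_Ici) fun x hx => ?_
      exact mul_le_mul_right (ENNReal.ofReal_le_ofReal <|
        Real.rpow_le_rpow_of_nonpos hR hx (neg_nonpos.2 hs)) _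
    _ ≤ ∫⁻ x, g x * ENNReal.ofReal (R ^ (-s)) ∂μ := setLIntegral_le_lintegral _ _
    _ = (∫⁻ x, g x ∂μ) * ENNReal.ofReal (R ^ (-s)) :=
      lintegral_mul_const' _ _ ENNReal.ofReal_ne_top

lemma setLIntegral_rpow_neg_rpow_preimage_Ici_le {A : ℝ≥0∞} {q : ℝ} (hf : Measurable f)
    (hs : 0 ≤ s) (hq : 0 < q) (hdq : d < s * q)
    (hμ : ∀ r, 0 < r → μ (f ⁻¹' Set.Ioc 0 r) ≤ A * ENNReal.ofReal (r ^ d)) (hR : 0 < R) :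
    (∫⁻ x in f ⁻¹' Set.Ici R, ENNReal.ofReal (f x ^ (-s)) ^ q ∂μ) ^ (1 / q)
      ≤ (A * ENNReal.ofReal (2 ^ d * (1 - 2 ^ (d - s * q))⁻¹)) ^ (1 / q)
        * ENNReal.ofReal (R ^ (d / q - s)) := by
  have hpow : ∀ x ∈ f ⁻¹' Set.Ici R,
      ENNReal.ofReal (f x ^ (-s)) ^ q = ENNReal.ofReal (f x ^ (-(s * q))) := fun x hx => by
    have hfx : 0 ≤ f x := hR.le.trans hx
    rw [ENNReal.ofReal_rpow_of_nonneg (Real.rpow_nonneg hfx _) hq.le, ← Real.rpow_mul hfx,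
      neg_mul]
  have hRq : (R ^ (d - s * q)) ^ (1 / q) = R ^ (d / q - s) := by
    rw [← Real.rpow_mul hR.le]
    congr 1
    field_simp
  rw [setLIntegral_congr_fun (hf measurableSet_Ici) hpow, ← hRq,
    ← ENNReal.ofReal_rpow_of_nonneg (by positivity) (by positivity),
    ← ENNReal.mul_rpow_of_nonneg _ _ (by positivity), mul_assoc,
    ← ENNReal.ofReal_mul' (by positivity)]
  exact ENNReal.rpow_le_rpow (setLIntegral_rpow_neg_preimage_Ici_le (by positivity) hdq hμ hR)
    (by positivity)

theorem exists_setLIntegral_mul_rpow_neg_le {A : ℝ≥0∞} {p : ℝ} (hf : Measurable f)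
    (hA : A ≠ ∞) (hd : 0 ≤ d) (hp : 1 ≤ p) (hs : d - d / p < s)
    (hμ : ∀ r, 0 < r → μ (f ⁻¹' Set.Ioc 0 r) ≤ A * ENNReal.ofReal (r ^ d)) :
    ∃ C : ℝ≥0∞, C ≠ ∞ ∧ ∀ (g : X → ℝ≥0∞) (R : ℝ), AEMeasurable g μ → 0 < R →
      ∫⁻ x in f ⁻¹' Set.Ici R, g x * ENNReal.ofReal (f x ^ (-s)) ∂μ
        ≤ C * (∫⁻ x, g x ^ p ∂μ) ^ (1 / p) * ENNReal.ofReal (R ^ (d - d / p - s)) := by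
  have hs0 : 0 ≤ s := (sub_nonneg.2 (div_le_self hd hp)).trans hs.le
  rcases hp.eq_or_lt with rfl | hp
  · refine ⟨1, ENNReal.one_ne_top, fun g R _ hR => ?_⟩
    simpa only [one_mul, ENNReal.rpow_one, div_one, sub_self, zero_sub]
      using setLIntegral_mul_rpow_neg_preimage_Ici_le hf g hs0 hR
  · obtain ⟨q, hpq⟩ : ∃ q, p.HolderConjugate q := ⟨_, .conjExponent hp⟩
    have hdpq : d - d / p = d / q := by
      rw [div_eq_mul_inv, div_eq_mul_inv, ← hpq.one_sub_inv]
      ring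
    rw [hdpq] at hs ⊢
    refine ⟨(A * ENNReal.ofReal (2 ^ d * (1 - 2 ^ (d - s * q))⁻¹)) ^ (1 / q),
      ENNReal.rpow_ne_top_of_nonneg hpq.symm.one_div_nonneg
        (ENNReal.mul_ne_top hA ENNReal.ofReal_ne_top), fun g R hg hR => ?_⟩
    calc
      _ ≤ (∫⁻ x in f ⁻¹' Set.Ici R, g x ^ p ∂μ) ^ (1 / p)
          * (∫⁻ x in f ⁻¹' Set.Ici R, ENNReal.ofReal (f x ^ (-s)) ^ q ∂μ) ^ (1 / q) :=
        ENNReal.lintegral_mul_le_Lp_mul_Lq _ hpq hg.restrict (by fun_prop)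
      _ ≤ (∫⁻ x, g x ^ p ∂μ) ^ (1 / p)
          * ((A * ENNReal.ofReal (2 ^ d * (1 - 2 ^ (d - s * q))⁻¹)) ^ (1 / q)
            * ENNReal.ofReal (R ^ (d / q - s))) := by
        gcongr ?_ * ?_
        · exact ENNReal.rpow_le_rpow (setLIntegral_le_lintegral _ _) hpq.one_div_nonneg
        · exact setLIntegral_rpow_neg_rpow_preimage_Ici_le hf hs0 hpq.symm.pos
            ((div_lt_iff₀ hpq.symm.pos).1 hs) hμ hR
      _ = _ := by ring

end Dyadic

section SeminormedGroup

variable {E : Type*} [SeminormedAddCommGroup E] {x : E}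

lemma norm_rpow_le_two_rpow_abs_mul_norm_sub_rpow {y : E} (hx : 0 < ‖x‖) (hxy : 2 * ‖y‖ ≤ ‖x‖)
    (a : ℝ) : ‖x‖ ^ a ≤ 2 ^ |a| * ‖x - y‖ ^ a := by
  have hlower : ‖x‖ ≤ 2 * ‖x - y‖ := by linarith [norm_sub_norm_le x y]
  have hupper : 2⁻¹ * ‖x - y‖ ≤ ‖x‖ := by linarith [norm_sub_le x y, norm_nonneg y]
  rcases le_total 0 a with ha | ha
  · rw [abs_of_nonneg ha, ← Real.mul_rpow two_pos.le (norm_nonneg _)]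
    exact Real.rpow_le_rpow hx.le hlower ha
  · rw [abs_of_nonpos ha, Real.rpow_neg two_pos.le, ← Real.inv_rpow two_pos.le,
      ← Real.mul_rpow (by positivity) (norm_nonneg _)]
    exact Real.rpow_le_rpow_of_nonpos (by linarith) hupper ha

lemma norm_rpow_sum_le_two_rpow_mul_prod_norm_sub_rpow {ι : Type*} [Fintype ι] {y : ι → E}
    (hx : 0 < ‖x‖) (hxy : ∀ k, 2 * ‖y k‖ ≤ ‖x‖) (α : ι → ℝ) :
    ‖x‖ ^ (∑ k, α k) ≤ 2 ^ (∑ k, |α k|) * ∏ k, ‖x - y k‖ ^ α k := by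
  rw [Real.rpow_sum_of_pos hx, Real.rpow_sum_of_pos two_pos, ← Finset.prod_mul_distrib]
  exact Finset.prod_le_prod (fun k _ => by positivity) fun k _ =>
    norm_rpow_le_two_rpow_abs_mul_norm_sub_rpow hx (hxy k) (α k)

end SeminormedGroup

section Lattice

variable {n : ℕ}

/-- The inclusion `ℤ ^ n → ℝ ^ n` into Euclidean space, through which `eucZ` is a norm. -/
def intToEuclidean (n : ℕ) : (Fin n → ℤ) →+ EuclideanSpace ℝ (Fin n) :=
  AddMonoidHom.mk' (fun v => WithLp.toLp 2 fun k => (v k : ℝ)) fun v w => by ext; simp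

lemma eucZ_eq_norm (v : Fin n → ℤ) : eucZ v = ‖intToEuclidean n v‖ := by
  simp [eucZ, EuclideanSpace.norm_eq, intToEuclidean]

lemma eucR_eq_norm (v : Fin n → ℝ) : eucR v = ‖(WithLp.toLp 2 v : EuclideanSpace ℝ (Fin n))‖ := by
  simp [eucR, EuclideanSpace.norm_eq]

lemma abs_le_eucZ (v : Fin n → ℤ) (k : Fin n) : |(v k : ℝ)| ≤ eucZ v :=
  (eucZ_eq_norm v).symm ▸ PiLp.norm_apply_le (intToEuclidean n v) k

lemma one_le_eucZ {v : Fin n → ℤ} (hv : v ≠ 0) : 1 ≤ eucZ v := by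
  obtain ⟨k, hk⟩ := Function.ne_iff.1 hv
  exact le_trans (mod_cast Int.one_le_abs hk) (abs_le_eucZ v k)

lemma setOf_eucZ_le_subset_Icc (n : ℕ) (r : ℝ) :
    {v : Fin n → ℤ | eucZ v ≤ r} ⊆ Set.Icc (fun _ => -⌊r⌋) (fun _ => ⌊r⌋) := by
  intro v hv
  have habs (k : Fin n) : |v k| ≤ ⌊r⌋ :=
    Int.le_floor.2 (by simpa using (abs_le_eucZ v k).trans hv)
  exact ⟨fun k => (abs_le.1 (habs k)).1, fun k => (abs_le.1 (habs k)).2⟩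

open MeasureTheory in
lemma count_preimage_eucZ_Ioc_le (n : ℕ) (r : ℝ) :
    Measure.count ((eucZ : (Fin n → ℤ) → ℝ) ⁻¹' Set.Ioc 0 r)
      ≤ 3 ^ n * ENNReal.ofReal (r ^ (n : ℝ)) := by
  rcases lt_or_ge r 1 with hr1 | hr1
  · have hempty : (eucZ : (Fin n → ℤ) → ℝ) ⁻¹' Set.Ioc 0 r = ∅ := by
      refine Set.eq_empty_of_forall_notMem fun v hv => ?_
      have hv0 : v ≠ 0 := by
        rintro rfl
        simp [eucZ] at hv
      exact (hv.2.trans_lt hr1).not_ge (one_le_eucZ hv0)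
    simp only [hempty, measure_empty, zero_le]
  · have hfloor : 0 ≤ ⌊r⌋ := Int.floor_nonneg.2 (zero_le_one.trans hr1)
    have hside : ((⌊r⌋ + 1 - -⌊r⌋).toNat : ℝ≥0∞) ≤ 3 * ENNReal.ofReal r := by
      rw [← ENNReal.ofReal_natCast, ← ENNReal.ofReal_ofNat, ← ENNReal.ofReal_mul (by norm_num)]
      refine ENNReal.ofReal_le_ofReal ?_
      rw [← Int.cast_natCast, Int.toNat_of_nonneg (by omega)]
      push_cast
      linarith [Int.floor_le r]
    calc
      _ ≤ Measure.count (Set.Icc (fun _ : Fin n => -⌊r⌋) (fun _ => ⌊r⌋)) :=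
        measure_mono (Set.Subset.trans (fun _ hv => hv.2) (setOf_eucZ_le_subset_Icc n r))
      _ = ((⌊r⌋ + 1 - -⌊r⌋).toNat : ℝ≥0∞) ^ n := by
        simp [← Finset.coe_Icc, Measure.count_apply_finset, Pi.card_Icc]
      _ ≤ (3 * ENNReal.ofReal r) ^ n := by gcongr
      _ = 3 ^ n * ENNReal.ofReal (r ^ (n : ℝ)) := by
        rw [mul_pow, Real.rpow_natCast, ENNReal.ofReal_pow (zero_le_one.trans hr1)]

theorem exists_tsum_mul_rpow_neg_eucZ_le (n : ℕ) {p s : ℝ} (hp : 1 ≤ p) (hs : n - n / p < s) :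
    ∃ C : ℝ, 0 < C ∧ ∀ (b : (Fin n → ℤ) → ℝ) (R : ℝ), 0 < R →
      ∑' i, (if R ≤ eucZ i then ENNReal.ofReal (|b i| * eucZ i ^ (-s)) else 0)
        ≤ ENNReal.ofReal C * lpNorm p b * ENNReal.ofReal (R ^ (n - n / p - s)) := by
  obtain ⟨C, hC, hbound⟩ := exists_setLIntegral_mul_rpow_neg_le
    (μ := MeasureTheory.Measure.count) (measurable_of_countable eucZ)
    (ENNReal.pow_ne_top ENNReal.ofNat_ne_top) n.cast_nonneg hp hs
    (fun r _ => count_preimage_eucZ_Ioc_le n r)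
  refine ⟨C.toReal + 1, by positivity, fun b R hR => ?_⟩
  calc
    _ = ∫⁻ i in eucZ ⁻¹' Set.Ici R, ENNReal.ofReal |b i| * ENNReal.ofReal (eucZ i ^ (-s))
          ∂MeasureTheory.Measure.count := by
      rw [← MeasureTheory.lintegral_indicator (.of_discrete), MeasureTheory.lintegral_count]
      simp only [Set.indicator_apply, Set.mem_preimage, Set.mem_Ici,
        ENNReal.ofReal_mul (abs_nonneg _)]
    _ ≤ C * lpNorm p b * ENNReal.ofReal (R ^ (n - n / p - s)) := by
      simpa only [MeasureTheory.lintegral_count, lpNorm] using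
        hbound (fun i => ENNReal.ofReal |b i|) R (measurable_of_countable _).aemeasurable hR
    _ ≤ _ := by
      gcongr
      exact (ENNReal.le_ofReal_iff_toReal_le hC (by positivity)).2 (lt_add_one _).le

lemma div_prod_rpow_eucZ_sub_le {ι : Type*} [Fintype ι] {i : Fin n → ℤ} {y : ι → Fin n → ℤ}
    (hi : 0 < eucZ i) (hy : ∀ k, 2 * eucZ (y k) ≤ eucZ i) (α : ι → ℝ) {c : ℝ} (hc : 0 ≤ c) :
    c / ∏ k, eucZ (i - y k) ^ α k ≤ 2 ^ (∑ k, |α k|) * (c * eucZ i ^ (-∑ k, α k)) := by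
  have hprod : eucZ i ^ (∑ k, α k) ≤ 2 ^ (∑ k, |α k|) * ∏ k, eucZ (i - y k) ^ α k := by
    simp only [eucZ_eq_norm, map_sub] at hi hy ⊢
    exact norm_rpow_sum_le_two_rpow_mul_prod_norm_sub_rpow hi hy α
  have hprod_pos : 0 < ∏ k, eucZ (i - y k) ^ α k :=
    pos_of_mul_pos_right ((Real.rpow_pos_of_pos hi _).trans_le hprod) (by positivity)
  rw [Real.rpow_neg hi.le, ← div_eq_mul_inv, mul_div_left_comm, div_eq_mul_inv]
  gcongr
  rwa [le_div_iff₀ (by positivity), inv_mul_le_iff₀ hprod_pos, mul_comm]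

theorem exists_tsum_div_prod_rpow_eucZ_sub_le {ι : Type*} [Fintype ι] (n : ℕ) (α : ι → ℝ) {p : ℝ}
    (hp : 1 ≤ p) (hα : n - n / p < ∑ k, α k) :
    ∃ C : ℝ, 0 < C ∧ ∀ (b : (Fin n → ℤ) → ℝ) (y : ι → Fin n → ℤ) (R : ℝ), 0 < R →
      (∀ k, 2 * eucZ (y k) ≤ R) →
      ∑' i, (if R ≤ eucZ i then ENNReal.ofReal (|b i| / ∏ k, eucZ (i - y k) ^ α k) else 0)
        ≤ ENNReal.ofReal C * lpNorm p b * ENNReal.ofReal (R ^ (n - n / p - ∑ k, α k)) := by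
  obtain ⟨C, hC, hbound⟩ := exists_tsum_mul_rpow_neg_eucZ_le n hp hα
  refine ⟨2 ^ (∑ k, |α k|) * C, by positivity, fun b y R hR hy => ?_⟩
  calc
    _ ≤ ∑' i, ENNReal.ofReal (2 ^ (∑ k, |α k|)) *
          (if R ≤ eucZ i then ENNReal.ofReal (|b i| * eucZ i ^ (-∑ k, α k)) else 0) :=
      ENNReal.tsum_le_tsum fun i => by
        split_ifs with hi
        · rw [← ENNReal.ofReal_mul (by positivity)]
          exact ENNReal.ofReal_le_ofReal <| div_prod_rpow_eucZ_sub_le (hR.trans_le hi)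
            (fun k => (hy k).trans hi) α (abs_nonneg _)
        · exact zero_le
    _ ≤ ENNReal.ofReal (2 ^ (∑ k, |α k|)) * (ENNReal.ofReal C * lpNorm p b *
          ENNReal.ofReal (R ^ (n - n / p - ∑ k, α k))) := by
      rw [ENNReal.tsum_mul_left]
      gcongr
      exact hbound b R hR
    _ = _ := by
      rw [ENNReal.ofReal_mul (by positivity)]
      ring

end Lattice

section OperatorNorm

variable {n : ℕ}

lemma eucR_pos {v : Fin n → ℝ} : 0 < eucR v ↔ v ≠ 0 := by
  simp [eucR_eq_norm]

lemma eucR_smul (c : ℝ) (v : Fin n → ℝ) : eucR (c • v) = |c| * eucR v := by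
  rw [eucR_eq_norm, eucR_eq_norm, WithLp.toLp_smul, norm_smul, Real.norm_eq_abs]

lemma eucR_mulVec_le {m : ℕ} {A : Matrix (Fin m) (Fin n) ℝ} {D : ℝ}
    (hA : ∀ x, eucR x = 1 → eucR (A.mulVec x) ≤ D) (x : Fin n → ℝ) :
    eucR (A.mulVec x) ≤ D * eucR x := by
  rcases eq_or_ne x 0 with rfl | hx
  · simp [eucR]
  · have hpos := eucR_pos.2 hx
    have hunit := hA ((eucR x)⁻¹ • x) (by
      rw [eucR_smul, abs_of_pos (inv_pos.2 hpos), inv_mul_cancel₀ hpos.ne'])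
    rwa [Matrix.mulVec_smul, eucR_smul, abs_of_pos (inv_pos.2 hpos), inv_mul_le_iff₀' hpos]
      at hunit

lemma eucZ_mulVec {m : ℕ} (A : Matrix (Fin m) (Fin n) ℤ) (j : Fin n → ℤ) :
    eucZ (A.mulVec j) = eucR ((A.map (Int.cast : ℤ → ℝ)).mulVec fun k => (j k : ℝ)) :=
  congrArg eucR <| funext fun i => (Int.castRingHom ℝ).map_mulVec A j i

lemma eucR_mulVec_pos {A : Matrix (Fin n) (Fin n) ℝ} (hA : A.det ≠ 0) {x : Fin n → ℝ}
    (hx : 0 < eucR x) : 0 < eucR (A.mulVec x) :=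
  eucR_pos.2 (mt (Matrix.eq_zero_of_mulVec_eq_zero hA) (eucR_pos.1 hx))

end OperatorNorm

theorem stmt6_general {ι : Type*} [Fintype ι] {n : ℕ} (α : ι → ℝ)
    (A : ι → Matrix (Fin n) (Fin n) ℤ) {D : ℝ} (hD : 0 < D)
    (hA : ∀ k x, eucR x = 1 → eucR (((A k).map (Int.cast : ℤ → ℝ)).mulVec x) ≤ D)
    {p : ℝ} (hp : 1 ≤ p) (hα : n - n / p < ∑ k, α k) :
    ∃ C : ℝ, 0 < C ∧ ∀ (b : (Fin n → ℤ) → ℝ) (j0 : Fin n → ℤ), j0 ≠ 0 →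
      ∑' i, (if 2 * D * eucZ j0 ≤ eucZ i then
          ENNReal.ofReal (|b i| / ∏ k, eucZ (i - (A k).mulVec j0) ^ α k) else 0)
        ≤ ENNReal.ofReal C * lpNorm p b *
          ENNReal.ofReal (eucZ j0 ^ (n - n / p - ∑ k, α k)) := by
  obtain ⟨C, hC, hbound⟩ := exists_tsum_div_prod_rpow_eucZ_sub_le n α hp hα
  refine ⟨C * (2 * D) ^ (n - n / p - ∑ k, α k), by positivity, fun b j0 hj0 => ?_⟩
  have hj0_pos : 0 < eucZ j0 := one_pos.trans_le (one_le_eucZ hj0)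
  have hnear (k : ι) : 2 * eucZ ((A k).mulVec j0) ≤ 2 * D * eucZ j0 := by
    rw [eucZ_mulVec, mul_assoc]
    gcongr
    exact eucR_mulVec_le (hA k) _
  refine (hbound b _ _ (by positivity) hnear).trans_eq ?_
  rw [Real.mul_rpow (by positivity) hj0_pos.le, ENNReal.ofReal_mul (by positivity),
    ENNReal.ofReal_mul hC.le]
  ring

theorem stmt6 (n : ℕ) (hn : 1 ≤ n) (α1 α2 : ℝ) (h1 : 0 < α1) (h2 : 0 < α2)
    (hsum : α1 + α2 = n)
    (A1 A2 : Matrix (Fin n) (Fin n) ℤ) (hA1 : A1.det ≠ 0) (hA2 : A2.det ≠ 0)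
    (hA12 : (A1 - A2).det ≠ 0)
    (d D : ℝ)
    (hd : IsLeast {r : ℝ | ∃ x : Fin n → ℝ, eucR x = 1 ∧
        r = eucR ((A1.map (Int.cast : ℤ → ℝ)).mulVec x - (A2.map (Int.cast : ℤ → ℝ)).mulVec x)} d)
    (hD : IsGreatest {r : ℝ | ∃ x : Fin n → ℝ, eucR x = 1 ∧
        (r = eucR ((A1.map (Int.cast : ℤ → ℝ)).mulVec x) ∨
         r = eucR ((A2.map (Int.cast : ℤ → ℝ)).mulVec x))} D)
    (p : ℝ) (hp : 1 ≤ p) :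
    ∃ C : ℝ, 0 < C ∧ ∀ (b : (Fin n → ℤ) → ℝ) (j0 : Fin n → ℤ), j0 ≠ 0 →
      (∑' i : Fin n → ℤ,
          if 2 * Real.sqrt n * D * eucZ j0 ≤ eucZ i ∧
              ¬(0 < eucZ (i - A1.mulVec j0) ∧ eucZ (i - A1.mulVec j0) ≤ d / 2 * eucZ j0) ∧
              ¬(0 < eucZ (i - A2.mulVec j0) ∧ eucZ (i - A2.mulVec j0) ≤ d / 2 * eucZ j0) then
            ENNReal.ofReal
              (|b i| / (eucZ (i - A1.mulVec j0) ^ α1 * eucZ (i - A2.mulVec j0) ^ α2))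
          else 0)
        ≤ ENNReal.ofReal C * lpNorm p b * ENNReal.ofReal (eucZ j0 ^ (-((n : ℝ) / p))) := by
  obtain ⟨x, hx, -⟩ := hD.1
  have hA : ∀ k x, eucR x = 1 → eucR (((![A1, A2] k).map (Int.cast : ℤ → ℝ)).mulVec x) ≤ D :=
    Fin.forall_fin_two.2
      ⟨fun x hx => hD.2 ⟨x, hx, .inl rfl⟩, fun x hx => hD.2 ⟨x, hx, .inr rfl⟩⟩
  have hdet : (A1.map (Int.cast : ℤ → ℝ)).det ≠ 0 := by rwa [← Int.cast_det, Int.cast_ne_zero]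
  have hDpos : 0 < D := (eucR_mulVec_pos hdet (hx ▸ one_pos)).trans_le (hA 0 x hx)
  have hα : (n : ℝ) - n / p < ∑ k, ![α1, α2] k := by
    simpa [hsum] using div_pos (Nat.cast_pos.2 hn) (one_pos.trans_le hp)
  obtain ⟨C, hC, hbound⟩ := stmt6_general ![α1, α2] ![A1, A2] hDpos hA hp hα
  have hregion (j0 : Fin n → ℤ) : 2 * D * eucZ j0 ≤ 2 * √n * D * eucZ j0 := by
    gcongr
    · exact Real.sqrt_nonneg _
    · exact le_mul_of_one_le_right two_pos.le (Real.one_le_sqrt.2 (mod_cast hn))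
  refine ⟨C, hC, fun b j0 hj0 => (ENNReal.tsum_le_tsum fun i => ?_).trans
    (by simpa [hsum] using hbound b j0 hj0)⟩
  split_ifs with hi hfar
  · exact le_rfl
  · exact absurd ((hregion j0).trans hi.1) hfar
  all_goals exact zero_le
end

section
/- Let α_1, α_2 > 0 with α_1 + α_2 = n, let A_1, A_2 be invertible n×n integer matrices with A_1 − A_2 invertible, and define the operator T̃ on sequences b : ℤ^n → ℝ by (T̃ b)(j) = Σ_{i ∈ ℤ^n, i ≠ A_1 j, i ≠ A_2 j} b(i) / (|i − A_1 j|^{α_1} |i − A_2 j|^{α_2}) for j ≠ 0 and (T̃ b)(0) = 0. Then for every 1 ≤ p < ∞ there exists C > 0 such that for all b ∈ ℓ^p(ℤ^n) and all λ > 0, the cardinality #{j ∈ ℤ^n : |(T̃ b)(j)| > λ} ≤ (C ‖b‖_{ℓ^p(ℤ^n)} / λ)^p; that is, T̃ is bounded from ℓ^p(ℤ^n) into weak ℓ^{p,∞}(ℤ^n). -/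
open scoped ENNReal BigOperators Classical

noncomputable def Ttil {n : ℕ} (α1 α2 : ℝ) (A1 A2 : Matrix (Fin n) (Fin n) ℤ)
    (b : (Fin n → ℤ) → ℝ) (j : Fin n → ℤ) : ℝ≥0∞ :=
  if j ≠ 0 then
    ∑' i : Fin n → ℤ,
      if i ≠ A1.mulVec j ∧ i ≠ A2.mulVec j then
        ENNReal.ofReal (|b i| / (eucZ (i - A1.mulVec j) ^ α1 * eucZ (i - A2.mulVec j) ^ α2))
      else 0
  else 0

/-!
Since `A₁ - A₂` is invertible, `|j| ≲ |i - A₁ j| + |i - A₂ j|`, so the larger of the two distances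
is `≳ |i| + |j|`. Where the smaller one is also of that size, the kernel of `T̃` is
`≲ (|i| + |j|) ^ (-n)`; elsewhere `i` is close to one of the points `A₁ j`, `A₂ j`, and the kernel
is `≲ |i - y| ^ (-α) * |i| ^ (-β)`, where `y` is this point, `α` its exponent and `β` the other
one. On the region `2 |i - y| ≤ |y|` the latter has bounded row and column sums because
`α + β = n`, so Schur's test makes it bounded on `ℓ^p`. Against `(|i| + |j|) ^ (-n)`, Hölder's
inequality only gives the pointwise bound `C |j| ^ (-n / p) ‖b‖_p`, and `|j| ^ (-n / p)` lies in
weak `ℓ^p` but not in `ℓ^p`.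
-/

/-- A nonnegative kernel `K` is of weak type `(p, p)` when `c ↦ ∑' i, K i · * c i` maps `ℓ^p(ι)` to
the weak space `ℓ^{p,∞}(κ)`. Sequences and thresholds `t` take values in `[0, ∞]`, so that no
summability has to be assumed. -/
def IsWeakTypeKernel {ι κ : Type*} (p : ℝ) (K : ι → κ → ℝ≥0∞) : Prop :=
  ∃ C : ℝ≥0∞, C ≠ ∞ ∧ ∀ (c : ι → ℝ≥0∞) (t : ℝ≥0∞),
    t ^ p * {j | t < ∑' i, K i j * c i}.encard ≤ C * ∑' i, c i ^ p

lemma rpow_eq_rpow_mul_div_rpow {p : ℝ} (hp : 0 ≤ p) {D : ℝ≥0∞} (hD₀ : D ≠ 0) (hD : D ≠ ∞)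
    (t : ℝ≥0∞) : t ^ p = D ^ p * (t / D) ^ p := by
  rw [← ENNReal.mul_rpow_of_nonneg _ _ hp, ENNReal.mul_div_cancel hD₀ hD]

namespace IsWeakTypeKernel

variable {ι κ κ' : Type*} {p : ℝ} {K K' : ι → κ → ℝ≥0∞}

lemma of_le_mul (hp : 0 ≤ p) {D : ℝ≥0∞} (hD₀ : D ≠ 0) (hD : D ≠ ∞)
    (hKK' : ∀ i j, K i j ≤ D * K' i j) (hK' : IsWeakTypeKernel p K') : IsWeakTypeKernel p K := by
  obtain ⟨C, hC, hweak⟩ := hK'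
  refine ⟨D ^ p * C, ENNReal.mul_ne_top (ENNReal.rpow_ne_top_of_nonneg hp hD) hC, fun c t => ?_⟩
  have hsubset : {j | t < ∑' i, K i j * c i} ⊆ {j | t / D < ∑' i, K' i j * c i} := by
    intro j (hj : t < _)
    refine ENNReal.div_lt_of_lt_mul' (hj.trans_le ?_)
    rw [← ENNReal.tsum_mul_left]
    refine ENNReal.tsum_le_tsum fun i => ?_
    rw [← mul_assoc]
    gcongr
    exact hKK' i j
  calc t ^ p * {j | t < ∑' i, K i j * c i}.encard
      ≤ t ^ p * {j | t / D < ∑' i, K' i j * c i}.encard := by gcongr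
    _ = D ^ p * ((t / D) ^ p * {j | t / D < ∑' i, K' i j * c i}.encard) := by
        rw [rpow_eq_rpow_mul_div_rpow hp hD₀ hD, mul_assoc]
    _ ≤ D ^ p * (C * ∑' i, c i ^ p) := by gcongr D ^ p * ?_; exact hweak c _
    _ = D ^ p * C * ∑' i, c i ^ p := (mul_assoc _ _ _).symm

lemma add (hp : 0 ≤ p) (hK : IsWeakTypeKernel p K) (hK' : IsWeakTypeKernel p K') :
    IsWeakTypeKernel p (fun i j => K i j + K' i j) := by
  obtain ⟨C, hC, hweak⟩ := hK
  obtain ⟨C', hC', hweak'⟩ := hK'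
  refine ⟨2 ^ p * (C + C'), ENNReal.mul_ne_top
    (ENNReal.rpow_ne_top_of_nonneg hp ENNReal.ofNat_ne_top) (ENNReal.add_ne_top.2 ⟨hC, hC'⟩),
    fun c t => ?_⟩
  set S := {j | t / 2 < ∑' i, K i j * c i}
  set S' := {j | t / 2 < ∑' i, K' i j * c i}
  have hsubset : {j | t < ∑' i, (K i j + K' i j) * c i} ⊆ S ∪ S' := by
    intro j (hj : t < _)
    by_contra! hnot
    simp only [S, S', Set.mem_union, Set.mem_ofPred_eq, not_or, not_lt] at hnot
    refine hj.not_ge ?_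
    simp only [add_mul]
    rw [ENNReal.tsum_add, ← ENNReal.add_halves t]
    exact add_le_add hnot.1 hnot.2
  have hcard : ({j | t < ∑' i, (K i j + K' i j) * c i}.encard : ℝ≥0∞) ≤ S.encard + S'.encard := by
    exact_mod_cast (Set.encard_le_encard hsubset).trans (Set.encard_union_le S S')
  calc t ^ p * {j | t < ∑' i, (K i j + K' i j) * c i}.encard
      ≤ t ^ p * (S.encard + S'.encard) := by gcongr
    _ = 2 ^ p * ((t / 2) ^ p * S.encard + (t / 2) ^ p * S'.encard) := by
        rw [rpow_eq_rpow_mul_div_rpow hp two_ne_zero ENNReal.ofNat_ne_top t, mul_assoc, mul_add]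
    _ ≤ 2 ^ p * (C * ∑' i, c i ^ p + C' * ∑' i, c i ^ p) := by
        gcongr 2 ^ p * (?_ + ?_)
        exacts [hweak c _, hweak' c _]
    _ = 2 ^ p * (C + C') * ∑' i, c i ^ p := by ring

lemma comp_injective {φ : κ' → κ} (hφ : φ.Injective) (hK : IsWeakTypeKernel p K) :
    IsWeakTypeKernel p (fun i j => K i (φ j)) := by
  obtain ⟨C, hC, hweak⟩ := hK
  refine ⟨C, hC, fun c t => le_trans ?_ (hweak c t)⟩
  gcongr
  rw [← hφ.encard_image]
  exact Set.encard_le_encard (Set.image_subset_iff.2 fun _ hj => hj)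

lemma of_tsum_rpow_le (hp : 0 ≤ p) {C : ℝ≥0∞} (hC : C ≠ ∞)
    (hstrong : ∀ c : ι → ℝ≥0∞, ∑' j, (∑' i, K i j * c i) ^ p ≤ C * ∑' i, c i ^ p) :
    IsWeakTypeKernel p K := by
  refine ⟨C, hC, fun c t => ?_⟩
  set S := {j | t < ∑' i, K i j * c i}
  calc t ^ p * S.encard = ∑' _ : S, t ^ p := by rw [ENNReal.tsum_set_const, mul_comm]
    _ ≤ ∑' j : S, (∑' i, K i j * c i) ^ p :=
        ENNReal.tsum_le_tsum fun j => ENNReal.rpow_le_rpow (le_of_lt j.2) hp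
    _ ≤ ∑' j, (∑' i, K i j * c i) ^ p :=
        ENNReal.tsum_comp_le_tsum_of_injective Subtype.val_injective _
    _ ≤ C * ∑' i, c i ^ p := hstrong c

lemma exists_encard_le (hp : 0 < p) (hK : IsWeakTypeKernel p K) :
    ∃ C : ℝ, 0 < C ∧ ∀ (c : ι → ℝ≥0∞) (t : ℝ≥0∞), t ≠ 0 → t ≠ ∞ →
      {j | t < ∑' i, K i j * c i}.encard ≤
        (ENNReal.ofReal C * (∑' i, c i ^ p) ^ (1 / p) / t) ^ p := by
  obtain ⟨C, hC, hweak⟩ := hK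
  refine ⟨(C.toReal + 1) ^ (1 / p), by positivity, fun c t ht₀ ht => ?_⟩
  have hCle : C ≤ ENNReal.ofReal (C.toReal + 1) := by
    rw [ENNReal.le_ofReal_iff_toReal_le hC (by positivity)]
    linarith
  have hpow : (ENNReal.ofReal ((C.toReal + 1) ^ (1 / p)) * (∑' i, c i ^ p) ^ (1 / p) / t) ^ p =
      ENNReal.ofReal (C.toReal + 1) * (∑' i, c i ^ p) / t ^ p := by
    rw [← ENNReal.ofReal_rpow_of_nonneg (by positivity) (by positivity),
      ← ENNReal.mul_rpow_of_nonneg _ _ (by positivity), ENNReal.div_rpow_of_nonneg _ _ hp.le,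
      one_div, ENNReal.rpow_inv_rpow hp.ne']
  rw [hpow, ENNReal.le_div_iff_mul_le (Or.inl (by simp [ht₀, ht])) (Or.inl (by simp [hp.le, ht])),
    mul_comm]
  exact (hweak c t).trans (by gcongr)

end IsWeakTypeKernel

lemma rpow_tsum_mul_le_mul_tsum_mul_rpow {ι : Type*} {p : ℝ} (hp : 1 ≤ p) (w f : ι → ℝ≥0∞) :
    (∑' i, w i * f i) ^ p ≤ (∑' i, w i) ^ (p - 1) * ∑' i, w i * f i ^ p := by
  have hp₀ : 0 < p := by linarith
  have hinv : 0 ≤ 1 - p⁻¹ := sub_nonneg.2 (inv_le_one_of_one_le₀ hp)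
  have hexp : (p - 1) * p⁻¹ = 1 - p⁻¹ := by field_simp
  rw [← ENNReal.le_rpow_inv_iff hp₀, ENNReal.mul_rpow_of_nonneg _ _ (by positivity),
    ← ENNReal.rpow_mul, hexp, ENNReal.tsum_eq_iSup_sum (f := fun i => w i * f i)]
  refine iSup_le fun s => (ENNReal.inner_le_weight_mul_Lp_of_nonneg s hp w f).trans ?_
  gcongr <;> exact ENNReal.sum_le_tsum s

lemma IsWeakTypeKernel.of_tsum_le {ι κ : Type*} {p : ℝ} (hp : 1 ≤ p) {K : ι → κ → ℝ≥0∞} {C : ℝ≥0∞}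
    (hC : C ≠ ∞) (hrow : ∀ j, ∑' i, K i j ≤ C) (hcol : ∀ i, ∑' j, K i j ≤ C) :
    IsWeakTypeKernel p K := by
  have hp₁ : 0 ≤ p - 1 := by linarith
  refine .of_tsum_rpow_le (by linarith) (C := C ^ (p - 1) * C)
    (ENNReal.mul_ne_top (ENNReal.rpow_ne_top_of_nonneg hp₁ hC) hC) fun c => ?_
  calc ∑' j, (∑' i, K i j * c i) ^ p
      ≤ ∑' j, (∑' i, K i j) ^ (p - 1) * ∑' i, K i j * c i ^ p :=
        ENNReal.tsum_le_tsum fun j => rpow_tsum_mul_le_mul_tsum_mul_rpow hp _ _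
    _ ≤ ∑' j, C ^ (p - 1) * ∑' i, K i j * c i ^ p := by gcongr with j; exact hrow j
    _ = C ^ (p - 1) * ∑' i, (∑' j, K i j) * c i ^ p := by
        rw [ENNReal.tsum_mul_left, ENNReal.tsum_comm]
        simp only [ENNReal.tsum_mul_right]
    _ ≤ C ^ (p - 1) * ∑' i, C * c i ^ p := by gcongr with i; exact hcol i
    _ = C ^ (p - 1) * C * ∑' i, c i ^ p := by rw [ENNReal.tsum_mul_left, mul_assoc]

lemma one_le_norm_int_of_ne_zero {a : ℤ} (ha : a ≠ 0) : 1 ≤ ‖a‖ := by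
  rw [Int.norm_eq_abs, ← Int.cast_abs]
  exact_mod_cast Int.one_le_abs ha

section Lattice

variable {n : ℕ}

lemma one_le_norm_of_ne_zero {k : Fin n → ℤ} (hk : k ≠ 0) : 1 ≤ ‖k‖ := by
  obtain ⟨t, ht⟩ := Function.ne_iff.1 hk
  exact (one_le_norm_int_of_ne_zero ht).trans (norm_le_pi_norm k t)

lemma norm_le_eucZ (k : Fin n → ℤ) : ‖k‖ ≤ eucZ k := by
  refine (pi_norm_le_iff_of_nonneg (Real.sqrt_nonneg _)).2 fun t => Real.le_sqrt_of_sq_le ?_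
  rw [Int.norm_eq_abs, sq_abs]
  exact Finset.single_le_sum (f := fun t => (k t : ℝ) ^ 2) (fun _ _ => sq_nonneg _)
    (Finset.mem_univ t)

lemma encard_norm_le {ρ : ℝ} (hρ : 1 ≤ ρ) :
    ({k : Fin n → ℤ | ‖k‖ ≤ ρ}.encard : ℝ≥0∞) ≤ ENNReal.ofReal ((3 * ρ) ^ n) := by
  have hfloor : 0 ≤ ⌊ρ⌋ := Int.floor_nonneg.2 (by linarith)
  have hball : {k : Fin n → ℤ | ‖k‖ ≤ ρ} =
      Finset.Icc (fun _ : Fin n => -⌊ρ⌋) (fun _ : Fin n => ⌊ρ⌋) := by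
    ext k
    simp only [Set.mem_ofPred_eq, pi_norm_le_iff_of_nonneg (zero_le_one.trans hρ), Int.norm_eq_abs,
      ← Int.cast_abs, ← Int.le_floor, abs_le, Finset.coe_Icc, Set.mem_Icc, Pi.le_def, forall_and]
  have hside : (((⌊ρ⌋ + 1 - -⌊ρ⌋).toNat : ℕ) : ℝ) ≤ 3 * ρ := by
    have hcast : (((⌊ρ⌋ + 1 - -⌊ρ⌋).toNat : ℤ) : ℝ) = 2 * ⌊ρ⌋ + 1 := by
      rw [Int.toNat_of_nonneg (by lia)]
      push_cast
      ring
    rw [Int.cast_natCast] at hcast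
    linarith [Int.floor_le ρ]
  have hcard : ((Finset.Icc (fun _ : Fin n => -⌊ρ⌋) (fun _ => ⌊ρ⌋)).card : ℝ) ≤ (3 * ρ) ^ n := by
    simp only [Pi.card_Icc, Int.card_Icc, Finset.prod_const, Finset.card_univ, Fintype.card_fin,
      Nat.cast_pow]
    gcongr
  rw [hball, Set.encard_coe_eq_coe_finsetCard, ENat.toENNReal_coe, ← ENNReal.ofReal_natCast]
  exact ENNReal.ofReal_le_ofReal hcard

lemma encard_ne_zero_norm_le (ρ : ℝ) :
    ({k : Fin n → ℤ | k ≠ 0 ∧ ‖k‖ ≤ ρ}.encard : ℝ≥0∞) ≤ ENNReal.ofReal ((3 * ρ) ^ n) := by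
  rcases le_or_gt 1 ρ with hρ₁ | hρ₁
  · refine le_trans (ENat.toENNReal_le.2 ?_) (encard_norm_le hρ₁)
    exact Set.encard_le_encard fun k hk => hk.2
  · have hempty : {k : Fin n → ℤ | k ≠ 0 ∧ ‖k‖ ≤ ρ} = ∅ :=
      Set.eq_empty_of_forall_notMem fun k hk =>
        (hk.2.trans_lt hρ₁).not_ge (one_le_norm_of_ne_zero hk.1)
    simp [hempty]

lemma mul_encard_mul_norm_pow_le (hn : n ≠ 0) {t X : ℝ} (ht : 0 < t) (hX : 0 ≤ X) :
    ENNReal.ofReal t * {j : Fin n → ℤ | j ≠ 0 ∧ ‖j‖ ^ n * t ≤ X}.encard ≤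
      ENNReal.ofReal (3 ^ n * X) := by
  set ρ : ℝ := (X / t) ^ (n : ℝ)⁻¹
  have hρ : ρ ^ n = X / t := Real.rpow_inv_natCast_pow (by positivity) hn
  have hsubset : {j : Fin n → ℤ | j ≠ 0 ∧ ‖j‖ ^ n * t ≤ X} ⊆ {j | j ≠ 0 ∧ ‖j‖ ≤ ρ} := by
    refine fun j ⟨hj, hle⟩ => ⟨hj, le_of_pow_le_pow_left₀ hn (by positivity) ?_⟩
    rwa [hρ, le_div_iff₀ ht]
  calc ENNReal.ofReal t * {j : Fin n → ℤ | j ≠ 0 ∧ ‖j‖ ^ n * t ≤ X}.encard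
      ≤ ENNReal.ofReal t * {j : Fin n → ℤ | j ≠ 0 ∧ ‖j‖ ≤ ρ}.encard := by gcongr
    _ ≤ ENNReal.ofReal t * ENNReal.ofReal ((3 * ρ) ^ n) := by
        gcongr
        exact encard_ne_zero_norm_le ρ
    _ = ENNReal.ofReal (3 ^ n * X) := by
        rw [mul_pow, hρ, ← ENNReal.ofReal_mul ht.le, mul_left_comm, mul_div_cancel₀ _ ht.ne']

lemma mul_encard_lt_norm_rpow_neg_mul_le (hn : n ≠ 0) {D : ℝ} (hD : 0 < D) (t X : ℝ≥0∞) :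
    t * {j : Fin n → ℤ | j ≠ 0 ∧ t < ENNReal.ofReal (D * ‖j‖ ^ (-(n : ℝ))) * X}.encard ≤
      ENNReal.ofReal (3 ^ n * D) * X := by
  rcases eq_or_ne X ∞ with rfl | hX
  · rw [ENNReal.mul_top (ENNReal.ofReal_pos.2 (by positivity)).ne']
    exact le_top
  rcases eq_or_ne t ∞ with rfl | ht
  · simp
  rcases eq_or_ne t 0 with rfl | ht₀
  · simp
  obtain ⟨x, hx, rfl⟩ : ∃ x : ℝ, 0 ≤ x ∧ ENNReal.ofReal x = X :=
    ⟨X.toReal, ENNReal.toReal_nonneg, ENNReal.ofReal_toReal hX⟩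
  obtain ⟨r, hr, rfl⟩ : ∃ r : ℝ, 0 < r ∧ ENNReal.ofReal r = t :=
    ⟨t.toReal, ENNReal.toReal_pos ht₀ ht, ENNReal.ofReal_toReal ht⟩
  rw [← ENNReal.ofReal_mul (by positivity), mul_assoc]
  refine le_trans ?_ (mul_encard_mul_norm_pow_le hn hr (by positivity))
  gcongr _ * ?_
  refine ENat.toENNReal_le.2 (Set.encard_le_encard fun j ⟨hj, hlt⟩ => ⟨hj, ?_⟩)
  have hj_pos : 0 < ‖j‖ ^ n := pow_pos (norm_pos_iff.2 hj) n
  rw [← ENNReal.ofReal_mul (by positivity), Real.rpow_neg (norm_nonneg j),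
    Real.rpow_natCast] at hlt
  calc ‖j‖ ^ n * r ≤ ‖j‖ ^ n * (D * (‖j‖ ^ n)⁻¹ * x) := by
        gcongr
        exact ((ENNReal.ofReal_lt_ofReal_iff_of_nonneg hr.le).1 hlt).le
    _ = D * x := by field_simp

lemma tsum_le_tsum_mul_of_forall_exists_norm_le {β : Type*} {f : (Fin n → ℤ) → ℝ≥0∞}
    {ρ : β → ℝ} {g : β → ℝ≥0∞}
    (hcover : ∀ k, f k ≠ 0 → ∃ m, 1 ≤ ρ m ∧ ‖k‖ ≤ ρ m ∧ f k ≤ g m) :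
    ∑' k, f k ≤ ∑' m, ENNReal.ofReal ((3 * ρ m) ^ n) * g m := by
  set S : β → Set (Fin n → ℤ) := fun m => {k | 1 ≤ ρ m ∧ ‖k‖ ≤ ρ m}
  have hcard (m : β) : ((S m).encard : ℝ≥0∞) ≤ ENNReal.ofReal ((3 * ρ m) ^ n) := by
    by_cases hm : 1 ≤ ρ m
    · simpa only [S, hm, true_and] using encard_norm_le hm
    · simp [S, hm]
  calc ∑' k, f k ≤ ∑' k, ∑' m, (S m).indicator (fun _ => g m) k := by
        refine ENNReal.tsum_le_tsum fun k => ?_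
        rcases eq_or_ne (f k) 0 with hk | hk
        · simp [hk]
        · obtain ⟨m, hρ, hkm, hfg⟩ := hcover k hk
          refine le_trans ?_ (ENNReal.le_tsum m)
          rwa [Set.indicator_of_mem (show k ∈ S m from ⟨hρ, hkm⟩)]
    _ = ∑' m, (S m).encard * g m := by
        rw [ENNReal.tsum_comm]
        refine tsum_congr fun m => ?_
        rw [← tsum_subtype, ENNReal.tsum_set_const]
    _ ≤ ∑' m, ENNReal.ofReal ((3 * ρ m) ^ n) * g m := by
        gcongr with m
        exact hcard m

lemma tsum_ofReal_mul_pow {M q : ℝ} (hM : 0 ≤ M) (hq₀ : 0 ≤ q) (hq₁ : q < 1) :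
    ∑' m : ℕ, ENNReal.ofReal (M * q ^ m) = ENNReal.ofReal (M / (1 - q)) := by
  rw [← ENNReal.ofReal_tsum_of_nonneg (fun m => by positivity)
    ((summable_geometric_of_lt_one hq₀ hq₁).mul_left M), tsum_mul_left,
    tsum_geometric_of_lt_one hq₀ hq₁, div_eq_mul_inv]

lemma exists_tsum_add_norm_rpow_le (n : ℕ) {s : ℝ} (hs : 0 < s) :
    ∃ C : ℝ, 0 < C ∧ ∀ R : ℝ, 1 ≤ R →
      ∑' k : Fin n → ℤ, ENNReal.ofReal ((‖k‖ + R) ^ (-(n + s))) ≤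
        ENNReal.ofReal (C * R ^ (-s)) := by
  set q : ℝ := 2 ^ (-s)
  have hq : q < 1 := Real.rpow_lt_one_of_one_lt_of_neg one_lt_two (by linarith)
  refine ⟨6 ^ n / (1 - q), div_pos (by positivity) (sub_pos.2 hq), fun R hR => ?_⟩
  have hR₀ : 0 < R := by linarith
  have hcover (k : Fin n → ℤ) : ∃ m : ℕ, 1 ≤ R * 2 ^ (m + 1) ∧ ‖k‖ ≤ R * 2 ^ (m + 1) ∧
      ENNReal.ofReal ((‖k‖ + R) ^ (-(n + s))) ≤ ENNReal.ofReal ((R * 2 ^ m) ^ (-(n + s))) := by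
    have hone : 1 ≤ (‖k‖ + R) / R := (one_le_div hR₀).2 (by linarith [norm_nonneg k])
    obtain ⟨m, hlower, hupper⟩ := exists_nat_pow_near hone one_lt_two
    rw [le_div_iff₀' hR₀] at hlower
    rw [div_lt_iff₀' hR₀] at hupper
    refine ⟨m, one_le_mul_of_one_le_of_one_le hR (one_le_pow₀ one_le_two), by linarith, ?_⟩
    exact ENNReal.ofReal_le_ofReal
      (Real.rpow_le_rpow_of_nonpos (by positivity) hlower (by linarith [n.cast_nonneg (α := ℝ)]))
  have hshell (m : ℕ) : (3 * (R * 2 ^ (m + 1))) ^ n * (R * 2 ^ m) ^ (-(n + s)) =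
      6 ^ n * R ^ (-s) * q ^ m := by
    have hbase : 3 * (R * 2 ^ (m + 1)) = 6 * (R * 2 ^ m) := by ring
    rw [hbase, mul_pow, mul_assoc, ← Real.rpow_natCast (R * 2 ^ m), ← Real.rpow_add (by positivity),
      neg_add, add_neg_cancel_left, Real.mul_rpow hR₀.le (by positivity),
      ← Real.rpow_pow_comm zero_le_two, mul_assoc]
  calc ∑' k : Fin n → ℤ, ENNReal.ofReal ((‖k‖ + R) ^ (-(n + s)))
      ≤ ∑' m : ℕ, ENNReal.ofReal ((3 * (R * 2 ^ (m + 1))) ^ n) *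
          ENNReal.ofReal ((R * 2 ^ m) ^ (-(n + s))) :=
        tsum_le_tsum_mul_of_forall_exists_norm_le fun k _ => hcover k
    _ = ∑' m : ℕ, ENNReal.ofReal (6 ^ n * R ^ (-s) * q ^ m) := by
        refine tsum_congr fun m => ?_
        rw [← ENNReal.ofReal_mul (by positivity), hshell]
    _ = ENNReal.ofReal (6 ^ n / (1 - q) * R ^ (-s)) := by
        rw [tsum_ofReal_mul_pow (by positivity) (by positivity) hq, div_mul_eq_mul_div]

lemma exists_div_two_pow_near {x R : ℝ} (hx : 0 < x) (hxR : x ≤ R) :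
    ∃ m : ℕ, R / 2 ^ m / 2 ≤ x ∧ x ≤ R / 2 ^ m := by
  obtain ⟨m, hlower, hupper⟩ := exists_nat_pow_near ((one_le_div hx).2 hxR) one_lt_two
  refine ⟨m, ?_, (le_div_comm₀ (by positivity) hx).1 hlower⟩
  rw [div_div, ← pow_succ]
  exact (div_le_comm₀ hx (by positivity)).1 hupper.le

lemma div_two_pow_pow_mul_rpow_neg {R : ℝ} (hR : 0 < R) (α : ℝ) (m : ℕ) :
    (R / 2 ^ m) ^ n * (R / 2 ^ m) ^ (-α) = R ^ (n - α) * (2 ^ (-(n - α))) ^ m := by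
  rw [← Real.rpow_natCast (R / 2 ^ m), ← Real.rpow_add (by positivity), ← sub_eq_add_neg,
    Real.div_rpow hR.le (by positivity), Real.rpow_pow_comm zero_le_two,
    Real.rpow_neg (by positivity), div_eq_mul_inv]

lemma exists_tsum_norm_rpow_le {α : ℝ} (hα : 0 ≤ α) (hαn : α < n) :
    ∃ C : ℝ, ∀ R : ℝ,
      (∑' k : Fin n → ℤ, if k ≠ 0 ∧ ‖k‖ ≤ R then ENNReal.ofReal (‖k‖ ^ (-α)) else 0) ≤
        ENNReal.ofReal (C * R ^ (n - α)) := by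
  set q : ℝ := 2 ^ (-(n - α))
  have hq : q < 1 := Real.rpow_lt_one_of_one_lt_of_neg one_lt_two (by linarith)
  refine ⟨3 ^ n * 2 ^ α / (1 - q), fun R => ?_⟩
  rcases le_or_gt R 0 with hR | hR
  · have hempty (k : Fin n → ℤ) : ¬ (k ≠ 0 ∧ ‖k‖ ≤ R) := fun h =>
      (h.2.trans hR).not_gt (norm_pos_iff.2 h.1)
    simp [hempty]
  have hcover (k : Fin n → ℤ) (hk : k ≠ 0) (hkR : ‖k‖ ≤ R) :
      ∃ m : ℕ, 1 ≤ R / 2 ^ m ∧ ‖k‖ ≤ R / 2 ^ m ∧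
        ENNReal.ofReal (‖k‖ ^ (-α)) ≤ ENNReal.ofReal ((R / 2 ^ m / 2) ^ (-α)) := by
    obtain ⟨m, hlower, hupper⟩ := exists_div_two_pow_near (norm_pos_iff.2 hk) hkR
    exact ⟨m, (one_le_norm_of_ne_zero hk).trans hupper, hupper, ENNReal.ofReal_le_ofReal
      (Real.rpow_le_rpow_of_nonpos (by positivity) hlower (by linarith))⟩
  have hshell (m : ℕ) : (3 * (R / 2 ^ m)) ^ n * (R / 2 ^ m / 2) ^ (-α) =
      3 ^ n * 2 ^ α * R ^ (n - α) * q ^ m := by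
    rw [Real.div_rpow (by positivity) zero_le_two, Real.rpow_neg zero_le_two, div_inv_eq_mul,
      mul_pow, mul_assoc _ (R ^ (n - α)), ← div_two_pow_pow_mul_rpow_neg hR]
    ring
  calc (∑' k : Fin n → ℤ, if k ≠ 0 ∧ ‖k‖ ≤ R then ENNReal.ofReal (‖k‖ ^ (-α)) else 0)
      ≤ ∑' m : ℕ, ENNReal.ofReal ((3 * (R / 2 ^ m)) ^ n) *
          ENNReal.ofReal ((R / 2 ^ m / 2) ^ (-α)) := by
        refine tsum_le_tsum_mul_of_forall_exists_norm_le fun k hk => ?_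
        have hmem : k ≠ 0 ∧ ‖k‖ ≤ R := by
          by_contra hnot
          exact hk (if_neg hnot)
        simpa only [if_pos hmem] using hcover k hmem.1 hmem.2
    _ = ∑' m : ℕ, ENNReal.ofReal (3 ^ n * 2 ^ α * R ^ (n - α) * q ^ m) := by
        refine tsum_congr fun m => ?_
        rw [← ENNReal.ofReal_mul (by positivity), hshell]
    _ = ENNReal.ofReal (3 ^ n * 2 ^ α / (1 - q) * R ^ (n - α)) := by
        rw [tsum_ofReal_mul_pow (by positivity) (by positivity) hq, div_mul_eq_mul_div]

/-- The part of `|i - y| ^ (-α) * |i| ^ (-β)` on which `i` is close to `y`. With `α + β = n` it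
models the singularity of the kernel of `T̃` at `y = A₁ j` or `y = A₂ j`. Here and below the norm is
the sup norm of `Fin n → ℤ`, which is at most the Euclidean norm `eucZ`. -/
noncomputable def nearKernel (α β : ℝ) (i y : Fin n → ℤ) : ℝ≥0∞ :=
  if i ≠ y ∧ 2 * ‖i - y‖ ≤ ‖y‖ then ENNReal.ofReal (‖i - y‖ ^ (-α) * ‖i‖ ^ (-β)) else 0

/-- The kernel `(|i| + |j|) ^ (-n)`, set to `0` for `j = 0`, which bounds the kernel of `T̃` away
from its singularities. -/
noncomputable def farKernel (i j : Fin n → ℤ) : ℝ≥0∞ :=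
  if j ≠ 0 then ENNReal.ofReal ((‖i‖ + ‖j‖) ^ (-(n : ℝ))) else 0

lemma norm_sub_le_of_two_mul_norm_sub_le {i y : Fin n → ℤ} (h : 2 * ‖i - y‖ ≤ ‖y‖) :
    ‖i - y‖ ≤ ‖i‖ ∧ ‖y‖ / 2 ≤ ‖i‖ := by
  have htri : ‖y‖ ≤ ‖i‖ + ‖i - y‖ := norm_le_insert i y
  constructor <;> linarith

/-- `‖z‖ ^ (-β)` times the restriction of `‖k‖ ^ (-α)` to `0 < ‖k‖ ≤ ‖z‖`, the common bound, with
`k = i - y`, for the rows (`z = y`) and the columns (`z = i`) of `nearKernel`. -/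
noncomputable def truncatedRieszWeight (α β : ℝ) (z k : Fin n → ℤ) : ℝ≥0∞ :=
  ENNReal.ofReal (‖z‖ ^ (-β)) *
    if k ≠ 0 ∧ ‖k‖ ≤ ‖z‖ then ENNReal.ofReal (‖k‖ ^ (-α)) else 0

lemma exists_tsum_truncatedRieszWeight_le {α β : ℝ} (hα : 0 ≤ α) (hβ : 0 < β)
    (hαβ : α + β = n) :
    ∃ C : ℝ, ∀ z : Fin n → ℤ, ∑' k, truncatedRieszWeight α β z k ≤ ENNReal.ofReal C := by
  obtain ⟨C, hsum⟩ := exists_tsum_norm_rpow_le (n := n) hα (by linarith)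
  refine ⟨C, fun z => ?_⟩
  rcases eq_or_ne z 0 with rfl | hz
  · simp [truncatedRieszWeight, hβ.ne']
  have hcancel : ‖z‖ ^ (-β) * (C * ‖z‖ ^ (n - α)) = C := by
    rw [mul_left_comm, ← Real.rpow_add (norm_pos_iff.2 hz), ← hαβ, add_sub_cancel_left,
      neg_add_cancel, Real.rpow_zero, mul_one]
  calc ∑' k, truncatedRieszWeight α β z k
      ≤ ENNReal.ofReal (‖z‖ ^ (-β)) * ENNReal.ofReal (C * ‖z‖ ^ (n - α)) := by
        simp only [truncatedRieszWeight, ENNReal.tsum_mul_left]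
        gcongr
        exact hsum ‖z‖
    _ = ENNReal.ofReal C := by rw [← ENNReal.ofReal_mul (by positivity), hcancel]

lemma nearKernel_le_left {α β : ℝ} (i y : Fin n → ℤ) :
    nearKernel α β i y ≤ truncatedRieszWeight α β i (i - y) := by
  unfold nearKernel truncatedRieszWeight
  split_ifs with hnear htrunc
  · rw [← ENNReal.ofReal_mul (by positivity), mul_comm]
  · exact absurd ⟨sub_ne_zero.2 hnear.1, (norm_sub_le_of_two_mul_norm_sub_le hnear.2).1⟩ htrunc
  all_goals exact zero_le

lemma nearKernel_le_right {α β : ℝ} (hβ : 0 ≤ β) (i y : Fin n → ℤ) :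
    nearKernel α β i y ≤ ENNReal.ofReal (2 ^ β) * truncatedRieszWeight α β y (i - y) := by
  unfold nearKernel truncatedRieszWeight
  split_ifs with hnear htrunc
  · have hy : 0 < ‖y‖ := (norm_pos_iff.2 (sub_ne_zero.2 hnear.1)).trans_le htrunc.2
    rw [← ENNReal.ofReal_mul (by positivity), ← ENNReal.ofReal_mul (by positivity)]
    refine ENNReal.ofReal_le_ofReal ?_
    calc ‖i - y‖ ^ (-α) * ‖i‖ ^ (-β) ≤ ‖i - y‖ ^ (-α) * (‖y‖ / 2) ^ (-β) := by
          gcongr ?_ * ?_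
          exact Real.rpow_le_rpow_of_nonpos (by positivity)
            (norm_sub_le_of_two_mul_norm_sub_le hnear.2).2 (by linarith)
      _ = 2 ^ β * (‖y‖ ^ (-β) * ‖i - y‖ ^ (-α)) := by
          rw [Real.div_rpow hy.le zero_le_two, Real.rpow_neg zero_le_two, div_inv_eq_mul]
          ring
  · exact absurd ⟨sub_ne_zero.2 hnear.1, by linarith [hnear.2, norm_nonneg (i - y)]⟩ htrunc
  all_goals exact zero_le

lemma isWeakTypeKernel_nearKernel {α β p : ℝ} (hα : 0 ≤ α) (hβ : 0 < β) (hαβ : α + β = n)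
    (hp : 1 ≤ p) : IsWeakTypeKernel p (nearKernel (n := n) α β) := by
  obtain ⟨C, hsum⟩ := exists_tsum_truncatedRieszWeight_le hα hβ hαβ
  refine .of_tsum_le hp (C := ENNReal.ofReal (2 ^ β) * ENNReal.ofReal C)
    (ENNReal.mul_ne_top ENNReal.ofReal_ne_top ENNReal.ofReal_ne_top) (fun y => ?_) fun i => ?_
  · calc ∑' i, nearKernel α β i y
        ≤ ∑' i, ENNReal.ofReal (2 ^ β) * truncatedRieszWeight α β y (i - y) :=
          ENNReal.tsum_le_tsum fun i => nearKernel_le_right hβ.le i y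
      _ = ENNReal.ofReal (2 ^ β) * ∑' k, truncatedRieszWeight α β y k := by
          rw [ENNReal.tsum_mul_left]
          exact congrArg _ ((Equiv.subRight y).tsum_eq _)
      _ ≤ ENNReal.ofReal (2 ^ β) * ENNReal.ofReal C := by gcongr; exact hsum y
  · calc ∑' y, nearKernel α β i y ≤ ∑' y, truncatedRieszWeight α β i (i - y) :=
          ENNReal.tsum_le_tsum fun y => nearKernel_le_left i y
      _ = ∑' k, truncatedRieszWeight α β i k := (Equiv.subLeft i).tsum_eq _
      _ ≤ ENNReal.ofReal C := hsum i
      _ ≤ ENNReal.ofReal (2 ^ β) * ENNReal.ofReal C :=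
          le_mul_of_one_le_left zero_le
            (ENNReal.one_le_ofReal.2 (Real.one_le_rpow one_le_two hβ.le))

lemma ofReal_rpow_neg_mul_rpow_le {p s R r : ℝ} (hp : 0 ≤ p) (hs : 0 ≤ s) (hR : 0 < R)
    (hRr : R ≤ r) (x : ℝ≥0∞) :
    ENNReal.ofReal (r ^ (-(s * p + s))) * (ENNReal.ofReal (r ^ s) * x) ^ p ≤
      ENNReal.ofReal (R ^ (-s)) * x ^ p := by
  have hr : 0 < r := hR.trans_le hRr
  rw [ENNReal.mul_rpow_of_nonneg _ _ hp, ← mul_assoc,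
    ENNReal.ofReal_rpow_of_pos (Real.rpow_pos_of_pos hr s), ← ENNReal.ofReal_mul (by positivity),
    ← Real.rpow_mul hr.le, ← Real.rpow_add hr, neg_add_rev, neg_add_cancel_right]
  gcongr ENNReal.ofReal ?_ * _
  exact Real.rpow_le_rpow_of_nonpos hR hRr (by linarith)

lemma exists_rpow_tsum_farKernel_le (hn : n ≠ 0) {p : ℝ} (hp : 1 ≤ p) :
    ∃ D : ℝ, 0 < D ∧ ∀ (c : (Fin n → ℤ) → ℝ≥0∞) {j : Fin n → ℤ}, j ≠ 0 →
      (∑' i, farKernel i j * c i) ^ p ≤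
        ENNReal.ofReal (D * ‖j‖ ^ (-(n : ℝ))) * ∑' i, c i ^ p := by
  have hp₀ : 0 < p := by linarith
  have hp₁ : 0 ≤ p - 1 := by linarith
  -- `s > 0` makes the weight `w` below summable, and `s * p = n` makes `w * f ^ p` bounded by
  -- `‖j‖ ^ (-s) * c ^ p`.
  set s : ℝ := n / p
  have hs : 0 < s := by positivity
  have hsp : s * p = n := div_mul_cancel₀ _ hp₀.ne'
  obtain ⟨C, hC, htail⟩ := exists_tsum_add_norm_rpow_le n hs
  refine ⟨C ^ (p - 1), by positivity, fun c j hj => ?_⟩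
  have hj_pos : 0 < ‖j‖ := norm_pos_iff.2 hj
  set w : (Fin n → ℤ) → ℝ≥0∞ := fun i => ENNReal.ofReal ((‖i‖ + ‖j‖) ^ (-(n + s)))
  set f : (Fin n → ℤ) → ℝ≥0∞ := fun i => ENNReal.ofReal ((‖i‖ + ‖j‖) ^ s) * c i
  have hfactor (i : Fin n → ℤ) : farKernel i j * c i = w i * f i := by
    rw [farKernel, if_pos hj, ← mul_assoc, ← ENNReal.ofReal_mul (by positivity),
      ← Real.rpow_add (by positivity), neg_add, neg_add_cancel_right]
  have hweight (i : Fin n → ℤ) : w i * f i ^ p ≤ ENNReal.ofReal (‖j‖ ^ (-s)) * c i ^ p := by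
    simpa only [hsp] using ofReal_rpow_neg_mul_rpow_le hp₀.le hs.le hj_pos
      (le_add_of_nonneg_left (norm_nonneg i)) (c i)
  have hexp : (‖j‖ ^ (-s)) ^ (p - 1) * ‖j‖ ^ (-s) = ‖j‖ ^ (-(n : ℝ)) := by
    rw [← Real.rpow_add_one' (by positivity) (by linarith), sub_add_cancel,
      ← Real.rpow_mul hj_pos.le, neg_mul, hsp]
  calc (∑' i, farKernel i j * c i) ^ p = (∑' i, w i * f i) ^ p := by simp only [hfactor]
    _ ≤ (∑' i, w i) ^ (p - 1) * ∑' i, w i * f i ^ p := rpow_tsum_mul_le_mul_tsum_mul_rpow hp w f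
    _ ≤ ENNReal.ofReal (C * ‖j‖ ^ (-s)) ^ (p - 1) *
          ∑' i, ENNReal.ofReal (‖j‖ ^ (-s)) * c i ^ p :=
        mul_le_mul' (ENNReal.rpow_le_rpow (htail _ (one_le_norm_of_ne_zero hj)) hp₁)
          (ENNReal.tsum_le_tsum hweight)
    _ = ENNReal.ofReal (C ^ (p - 1) * ‖j‖ ^ (-(n : ℝ))) * ∑' i, c i ^ p := by
        rw [ENNReal.tsum_mul_left, ← mul_assoc, ENNReal.ofReal_rpow_of_pos (by positivity),
          ← ENNReal.ofReal_mul (by positivity), Real.mul_rpow hC.le (by positivity), mul_assoc,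
          hexp]

lemma isWeakTypeKernel_farKernel (hn : n ≠ 0) {p : ℝ} (hp : 1 ≤ p) :
    IsWeakTypeKernel p (farKernel (n := n)) := by
  have hp₀ : 0 < p := by linarith
  obtain ⟨D, hD, hpointwise⟩ := exists_rpow_tsum_farKernel_le hn hp
  refine ⟨ENNReal.ofReal (3 ^ n * D), ENNReal.ofReal_ne_top, fun c t => ?_⟩
  refine le_trans ?_ (mul_encard_lt_norm_rpow_neg_mul_le hn hD (t ^ p) (∑' i, c i ^ p))
  gcongr t ^ p * ?_
  refine ENat.toENNReal_le.2 (Set.encard_le_encard fun j (hj : t < _) => ?_)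
  have hj₀ : j ≠ 0 := by
    rintro rfl
    simp [farKernel] at hj
  exact ⟨hj₀, (ENNReal.rpow_lt_rpow hj hp₀).trans_le (hpointwise c hj₀)⟩

lemma rpow_neg_le_of_le_mul {L D u α : ℝ} (hL : 0 < L) (hD : 0 < D) (hα : 0 ≤ α)
    (h : L ≤ D * u) : u ^ (-α) ≤ D ^ α * L ^ (-α) := by
  calc u ^ (-α) ≤ (L / D) ^ (-α) :=
        Real.rpow_le_rpow_of_nonpos (by positivity) ((div_le_iff₀' hD).2 h) (by linarith)
    _ = D ^ α * L ^ (-α) := by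
        rw [Real.div_rpow hL.le hD.le, Real.rpow_neg hD.le, div_inv_eq_mul, mul_comm]

lemma rpow_mul_rpow_le_nearKernel {α β D : ℝ} (hβ : 0 ≤ β) (hβn : β ≤ n) (hD : 1 ≤ D)
    {i x y : Fin n → ℤ} (hix : i ≠ x) (hnear : 2 * ‖i - x‖ ≤ ‖x‖) (hfar : ‖i‖ ≤ D * ‖i - y‖) :
    ENNReal.ofReal (‖i - x‖ ^ (-α) * ‖i - y‖ ^ (-β)) ≤
      ENNReal.ofReal (D ^ n) * nearKernel α β i x := by
  have hi : 0 < ‖i‖ := (norm_pos_iff.2 (sub_ne_zero.2 hix)).trans_le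
    (norm_sub_le_of_two_mul_norm_sub_le hnear).1
  rw [nearKernel, if_pos ⟨hix, hnear⟩, ← ENNReal.ofReal_mul (by positivity)]
  refine ENNReal.ofReal_le_ofReal ?_
  calc ‖i - x‖ ^ (-α) * ‖i - y‖ ^ (-β) ≤ ‖i - x‖ ^ (-α) * (D ^ β * ‖i‖ ^ (-β)) := by
        gcongr ?_ * ?_
        exact rpow_neg_le_of_le_mul hi (by linarith) hβ hfar
    _ ≤ ‖i - x‖ ^ (-α) * (D ^ (n : ℝ) * ‖i‖ ^ (-β)) := by gcongr
    _ = D ^ n * (‖i - x‖ ^ (-α) * ‖i‖ ^ (-β)) := by rw [Real.rpow_natCast, mul_left_comm]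

lemma rpow_mul_rpow_le_farKernel {α β D : ℝ} (hα : 0 ≤ α) (hβ : 0 ≤ β) (hαβ : α + β = n)
    (hD : 0 < D) {i j x y : Fin n → ℤ} (hj : j ≠ 0) (hx : ‖i‖ + ‖j‖ ≤ D * ‖i - x‖)
    (hy : ‖i‖ + ‖j‖ ≤ D * ‖i - y‖) :
    ENNReal.ofReal (‖i - x‖ ^ (-α) * ‖i - y‖ ^ (-β)) ≤ ENNReal.ofReal (D ^ n) * farKernel i j := by
  have hL : 0 < ‖i‖ + ‖j‖ := add_pos_of_nonneg_of_pos (norm_nonneg i) (norm_pos_iff.2 hj)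
  rw [farKernel, if_pos hj, ← ENNReal.ofReal_mul (by positivity)]
  refine ENNReal.ofReal_le_ofReal ?_
  calc ‖i - x‖ ^ (-α) * ‖i - y‖ ^ (-β)
      ≤ D ^ α * (‖i‖ + ‖j‖) ^ (-α) * (D ^ β * (‖i‖ + ‖j‖) ^ (-β)) := by
        gcongr ?_ * ?_
        exacts [rpow_neg_le_of_le_mul hL hD hα hx, rpow_neg_le_of_le_mul hL hD hβ hy]
    _ = D ^ n * (‖i‖ + ‖j‖) ^ (-(n : ℝ)) := by
        rw [mul_mul_mul_comm, ← Real.rpow_add hD, ← Real.rpow_add hL, ← neg_add, hαβ,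
          Real.rpow_natCast]

lemma rpow_mul_rpow_le_nearKernel_add_farKernel {α β a : ℝ} (hα : 0 ≤ α) (hβ : 0 ≤ β)
    (hαβ : α + β = n) (ha : 0 ≤ a) {i j x y : Fin n → ℤ} (hj : j ≠ 0) (hix : i ≠ x)
    (hy : ‖y‖ ≤ a * ‖j‖) (hjx : ‖j‖ ≤ a * ‖x‖) (hjxy : ‖j‖ ≤ a * ‖x - y‖)
    (hle : ‖i - x‖ ≤ ‖i - y‖) :
    ENNReal.ofReal (‖i - x‖ ^ (-α) * ‖i - y‖ ^ (-β)) ≤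
      ENNReal.ofReal ((3 + 2 * a + 2 * a ^ 2) ^ n) * (nearKernel α β i x + farKernel i j) := by
  have hj_le : ‖j‖ ≤ 2 * a * ‖i - y‖ := by
    have htri : ‖x - y‖ ≤ 2 * ‖i - y‖ := by
      linarith [norm_sub_le_norm_sub_add_norm_sub x i y, norm_sub_rev x i]
    linarith [mul_le_mul_of_nonneg_left htri ha]
  have hfar_y : ‖i‖ + ‖j‖ ≤ (3 + 2 * a + 2 * a ^ 2) * ‖i - y‖ := by
    linarith [norm_le_norm_sub_add i y, mul_le_mul_of_nonneg_left hj_le ha, norm_nonneg (i - y)]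
  rcases le_or_gt (2 * ‖i - x‖) ‖x‖ with hnear | hfar
  · refine (rpow_mul_rpow_le_nearKernel hβ (by linarith) (by nlinarith) hix hnear
      (le_of_add_le_of_nonneg_left hfar_y (norm_nonneg j))).trans ?_
    gcongr
    exact le_self_add
  · have hfar_x : ‖i‖ + ‖j‖ ≤ (3 + 2 * a + 2 * a ^ 2) * ‖i - x‖ := by
      linarith [norm_le_norm_sub_add i x, mul_le_mul_of_nonneg_left hfar.le ha,
        mul_nonneg (sq_nonneg a) (norm_nonneg (i - x))]
    refine (rpow_mul_rpow_le_farKernel hα hβ hαβ (by positivity) hj hfar_x hfar_y).trans ?_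
    gcongr
    exact le_add_self

lemma eventually_norm_mulVec_le_mul_norm {l m R : Type*} [Fintype l] [Fintype m]
    [NonUnitalSeminormedRing R] (A : Matrix l m R) :
    ∀ᶠ a : ℝ in Filter.atTop, ∀ v, ‖A.mulVec v‖ ≤ a * ‖v‖ := by
  let := Matrix.linftyOpSeminormedAddCommGroup (m := l) (n := m) (α := R)
  filter_upwards [Filter.eventually_ge_atTop ‖A‖] with a ha v
  exact (Matrix.linfty_opNorm_mulVec A v).trans (by gcongr)

lemma eventually_norm_le_mul_norm_mulVec {A : Matrix (Fin n) (Fin n) ℤ} (hA : A.det ≠ 0) :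
    ∀ᶠ a : ℝ in Filter.atTop, ∀ v, ‖v‖ ≤ a * ‖A.mulVec v‖ := by
  filter_upwards [eventually_norm_mulVec_le_mul_norm A.adjugate] with a ha v
  calc ‖v‖ ≤ ‖A.det‖ * ‖v‖ :=
        le_mul_of_one_le_left (norm_nonneg v) (one_le_norm_int_of_ne_zero hA)
    _ = ‖A.adjugate.mulVec (A.mulVec v)‖ := by
        rw [Matrix.mulVec_mulVec, Matrix.adjugate_mul, Matrix.smul_mulVec, Matrix.one_mulVec,
          norm_smul]
    _ ≤ a * ‖A.mulVec v‖ := ha _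

/-- The kernel of `T̃`, with the excluded indices `j = 0`, `i = A₁ j` and `i = A₂ j` given the
value `0`. -/
noncomputable def ttilKernel (α1 α2 : ℝ) (A1 A2 : Matrix (Fin n) (Fin n) ℤ) (i j : Fin n → ℤ) :
    ℝ≥0∞ :=
  if j ≠ 0 ∧ i ≠ A1.mulVec j ∧ i ≠ A2.mulVec j then
    ENNReal.ofReal (eucZ (i - A1.mulVec j) ^ α1 * eucZ (i - A2.mulVec j) ^ α2)⁻¹
  else 0

lemma Ttil_eq_tsum_ttilKernel_mul (α1 α2 : ℝ) (A1 A2 : Matrix (Fin n) (Fin n) ℤ)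
    (b : (Fin n → ℤ) → ℝ) (j : Fin n → ℤ) :
    Ttil α1 α2 A1 A2 b j = ∑' i, ttilKernel α1 α2 A1 A2 i j * ENNReal.ofReal |b i| := by
  by_cases hj : j = 0
  · simp [Ttil, ttilKernel, hj]
  · simp only [Ttil, ttilKernel, ne_eq, hj, not_false_eq_true, if_true, true_and, ite_mul, zero_mul,
      ← ENNReal.ofReal_mul' (abs_nonneg _), div_eq_inv_mul]

lemma inv_eucZ_rpow_le {α : ℝ} (hα : 0 ≤ α) {k : Fin n → ℤ} (hk : k ≠ 0) :
    (eucZ k ^ α)⁻¹ ≤ ‖k‖ ^ (-α) := by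
  have hk_pos : 0 < ‖k‖ := norm_pos_iff.2 hk
  rw [Real.rpow_neg hk_pos.le]
  gcongr
  exact norm_le_eucZ k

lemma ttilKernel_le_ofReal {α1 α2 : ℝ} (h1 : 0 ≤ α1) (h2 : 0 ≤ α2)
    (A1 A2 : Matrix (Fin n) (Fin n) ℤ) (i j : Fin n → ℤ) :
    ttilKernel α1 α2 A1 A2 i j ≤
      ENNReal.ofReal (‖i - A1.mulVec j‖ ^ (-α1) * ‖i - A2.mulVec j‖ ^ (-α2)) := by
  unfold ttilKernel
  split_ifs with hij
  · rw [mul_inv]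
    exact ENNReal.ofReal_le_ofReal (mul_le_mul (inv_eucZ_rpow_le h1 (sub_ne_zero.2 hij.2.1))
      (inv_eucZ_rpow_le h2 (sub_ne_zero.2 hij.2.2))
      (inv_nonneg.2 (Real.rpow_nonneg (Real.sqrt_nonneg _) _)) (by positivity))
  · exact zero_le

lemma exists_ttilKernel_le {α1 α2 : ℝ} (h1 : 0 ≤ α1) (h2 : 0 ≤ α2) (hsum : α1 + α2 = n)
    {A1 A2 : Matrix (Fin n) (Fin n) ℤ} (hA1 : A1.det ≠ 0) (hA2 : A2.det ≠ 0)
    (hA12 : (A1 - A2).det ≠ 0) :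
    ∃ D : ℝ, 0 < D ∧ ∀ i j, ttilKernel α1 α2 A1 A2 i j ≤
      ENNReal.ofReal D * (nearKernel α1 α2 i (A1.mulVec j) + nearKernel α2 α1 i (A2.mulVec j) +
        farKernel i j) := by
  obtain ⟨a, ha, hupper₁, hupper₂, hlower₁, hlower₂, hlower₁₂⟩ :=
    ((Filter.eventually_ge_atTop 0).and <|
      (eventually_norm_mulVec_le_mul_norm A1).and <|
      (eventually_norm_mulVec_le_mul_norm A2).and <|
      (eventually_norm_le_mul_norm_mulVec hA1).and <|
      (eventually_norm_le_mul_norm_mulVec hA2).and <|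
      eventually_norm_le_mul_norm_mulVec hA12).exists
  refine ⟨(3 + 2 * a + 2 * a ^ 2) ^ n, by positivity, fun i j => ?_⟩
  by_cases hij : j ≠ 0 ∧ i ≠ A1.mulVec j ∧ i ≠ A2.mulVec j
  swap
  · rw [ttilKernel, if_neg hij]
    exact zero_le
  obtain ⟨hj, hi1, hi2⟩ := hij
  refine (ttilKernel_le_ofReal h1 h2 A1 A2 i j).trans ?_
  have hdiff : ‖j‖ ≤ a * ‖A1.mulVec j - A2.mulVec j‖ := by
    simpa only [Matrix.sub_mulVec] using hlower₁₂ j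
  rcases le_total ‖i - A1.mulVec j‖ ‖i - A2.mulVec j‖ with hle | hle
  · refine (rpow_mul_rpow_le_nearKernel_add_farKernel h1 h2 hsum ha hj hi1 (hupper₂ j)
      (hlower₁ j) hdiff hle).trans ?_
    gcongr
    exact le_self_add
  · rw [mul_comm (_ ^ _)]
    refine (rpow_mul_rpow_le_nearKernel_add_farKernel h2 h1 (by linarith) ha hj hi2 (hupper₁ j)
      (hlower₂ j) (by rwa [norm_sub_rev]) hle).trans ?_
    gcongr
    exact le_add_self

lemma isWeakTypeKernel_ttilKernel (hn : n ≠ 0) {α1 α2 p : ℝ} (h1 : 0 < α1) (h2 : 0 < α2)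
    (hsum : α1 + α2 = n) {A1 A2 : Matrix (Fin n) (Fin n) ℤ} (hA1 : A1.det ≠ 0) (hA2 : A2.det ≠ 0)
    (hA12 : (A1 - A2).det ≠ 0) (hp : 1 ≤ p) :
    IsWeakTypeKernel p (ttilKernel α1 α2 A1 A2) := by
  have hp₀ : 0 ≤ p := by linarith
  obtain ⟨D, hD, hle⟩ := exists_ttilKernel_le h1.le h2.le hsum hA1 hA2 hA12
  have hnear₁ : IsWeakTypeKernel p fun i j => nearKernel α1 α2 i (A1.mulVec j) :=
    (isWeakTypeKernel_nearKernel h1.le h2 hsum hp).comp_injective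
      (Matrix.mulVec_injective_of_det_ne_zero hA1)
  have hnear₂ : IsWeakTypeKernel p fun i j => nearKernel α2 α1 i (A2.mulVec j) :=
    (isWeakTypeKernel_nearKernel h2.le h1 (by linarith) hp).comp_injective
      (Matrix.mulVec_injective_of_det_ne_zero hA2)
  have hfar : IsWeakTypeKernel p (farKernel (n := n)) := isWeakTypeKernel_farKernel hn hp
  exact .of_le_mul hp₀ (ENNReal.ofReal_pos.2 hD).ne' ENNReal.ofReal_ne_top hle
    ((hnear₁.add hp₀ hnear₂).add hp₀ hfar)

end Lattice

lemma tsum_ite_one_eq_encard {κ : Type*} (P : κ → Prop) [DecidablePred P] :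
    (∑' j, if P j then (1 : ℝ≥0∞) else 0) = {j | P j}.encard := by
  rw [← ENNReal.tsum_set_one, tsum_subtype {j | P j} fun _ => (1 : ℝ≥0∞)]
  refine tsum_congr fun j => ?_
  simp [Set.indicator_apply]

theorem stmt7 (n : ℕ) (hn : 1 ≤ n) (α1 α2 : ℝ) (h1 : 0 < α1) (h2 : 0 < α2)
    (hsum : α1 + α2 = n)
    (A1 A2 : Matrix (Fin n) (Fin n) ℤ) (hA1 : A1.det ≠ 0) (hA2 : A2.det ≠ 0)
    (hA12 : (A1 - A2).det ≠ 0)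
    (p : ℝ) (hp : 1 ≤ p) :
    ∃ C : ℝ, 0 < C ∧ ∀ b : (Fin n → ℤ) → ℝ, lpNorm p b ≠ ⊤ → ∀ lam : ℝ, 0 < lam →
      (∑' j : Fin n → ℤ,
          if ENNReal.ofReal lam < Ttil α1 α2 A1 A2 b j then (1 : ℝ≥0∞) else 0)
        ≤ (ENNReal.ofReal C * lpNorm p b / ENNReal.ofReal lam) ^ p := by
  obtain ⟨C, hC, hweak⟩ :=
    (isWeakTypeKernel_ttilKernel (Nat.one_le_iff_ne_zero.1 hn) h1 h2 hsum hA1 hA2 hA12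
      hp).exists_encard_le (by linarith)
  refine ⟨C, hC, fun b _ lam hlam => ?_⟩
  simp only [Ttil_eq_tsum_ttilKernel_mul, tsum_ite_one_eq_encard, lpNorm]
  exact hweak (fun i => ENNReal.ofReal |b i|) _ (ENNReal.ofReal_pos.2 hlam).ne'
    ENNReal.ofReal_ne_top
end
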